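/- arXiv:2202.04140 — 8 statements merged into one kernel-verified Lean document; each statement's English description precedes it below -/
import Mathlib

section
/- For all positive integers ν and D, the number π(ν, D) of integer partitions of D into exactly ν positive parts satisfies (1/ν!) · C(D−1, ν−1) ≤ π(ν, D) ≤ (D + ν(ν−1)/2)^{ν−1} / (ν! · (ν−1)!), where C(a,b) denotes the binomial coefficient. -/
/-!
Both bounds compare partitions with compositions through the action of the symmetric group on
`ν`-tuples. Subtracting `1` from every part identifies partitions of `D` into `ν` parts with
antitone tuples of natural numbers with sum `M = D - ν` (`partCount_eq_card_antitoneTuples`), while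
all tuples with sum `M` are counted by stars and bars (`card_antidiagonalTuple`).

* Every tuple is a rearrangement of an antitone one, so the number of tuples with sum `M` is at most
  `ν!` times the number of antitone ones (`card_tuples_le`); this is the lower bound.
* Adding the staircase `(ν - 1, …, 1, 0)` to an antitone tuple makes it strictly antitone, so its
  `ν!` rearrangements are pairwise distinct, and they determine the tuple. Hence `ν!` times the
  number of antitone tuples is at most the number of tuples with sum `M + ν(ν-1)/2`
  (`factorial_mul_card_antitoneTuples_le`); the upper bound follows from `C(N, r) ≤ N ^ r / r!`.
-/

/-- `partCount ν D` is the number of integer partitions of `D` into exactly `ν`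
positive parts, realized as weakly decreasing tuples `k : Fin ν → ℕ` with all
entries at least `1` that sum to `D`.  (For `ν = 0` this is `0` whenever `D ≥ 1`.) -/
def partCount (ν D : ℕ) : ℕ :=
  ((Finset.univ : Finset (Fin ν → Fin (D + 1))).filter
    (fun k => (∀ i j : Fin ν, i ≤ j → (k j : ℕ) ≤ (k i : ℕ)) ∧
      (∀ i, 1 ≤ (k i : ℕ)) ∧ (∑ i, (k i : ℕ)) = D)).card

open Finset in
/-- Antitone `n`-tuples of natural numbers with sum `M`: the partitions of `M` into at most `n`
parts, padded with zeros. -/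
def antitoneTuples (n M : ℕ) : Finset (Fin n → ℕ) :=
  open Classical in {f ∈ Nat.antidiagonalTuple n M | Antitone f}

lemma mem_antitoneTuples {n M : ℕ} {f : Fin n → ℕ} :
    f ∈ antitoneTuples n M ↔ ∑ i, f i = M ∧ Antitone f := by
  simp [antitoneTuples, Finset.Nat.mem_antidiagonalTuple]

/-- Stars and bars, transferred from the count of multisets of size `M` on `m + 1` letters. -/
lemma card_antidiagonalTuple (m M : ℕ) :
    (Finset.Nat.antidiagonalTuple (m + 1) M).card = (M + m).choose m := by
  rw [← Finset.piAntidiag_univ_fin_eq_antidiagonalTuple, ← Finset.map_sym_eq_piAntidiag,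
    Finset.card_map, Finset.sym_univ, Finset.card_univ, Sym.card_sym_eq_choose, Fintype.card_fin,
    show m + 1 + M - 1 = M + m by omega, Nat.choose_symm_add]

lemma card_tuples_le (n M : ℕ) :
    (Finset.Nat.antidiagonalTuple n M).card ≤ n.factorial * (antitoneTuples n M).card := by
  have hcard : n.factorial * (antitoneTuples n M).card =
      ((Finset.univ : Finset (Equiv.Perm (Fin n))) ×ˢ antitoneTuples n M).card := by
    simp [Finset.card_product, Fintype.card_perm]
  rw [hcard]
  refine Finset.card_le_card_of_surjOn (fun p => p.2 ∘ p.1) ?_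
  intro f hf
  have hf' : ∑ i, f i = M := by simpa [Finset.Nat.mem_antidiagonalTuple] using hf
  -- `Tuple.sort` sorts increasingly; reversing the indices gives the antitone rearrangement.
  let τ : Equiv.Perm (Fin n) := Fin.revPerm.trans (Tuple.sort f)
  refine ⟨(τ.symm, f ∘ τ), ?_, by ext; simp⟩
  simp only [Finset.coe_product, Set.mem_prod, Finset.coe_univ, Set.mem_univ, true_and,
    Finset.mem_coe, mem_antitoneTuples]
  refine ⟨by rw [← hf']; exact Equiv.sum_comp τ f, ?_⟩
  exact (Tuple.monotone_sort f).comp_antitone Fin.rev_anti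

lemma strictAnti_add_staircase {n : ℕ} {f : Fin n → ℕ} (hf : Antitone f) :
    StrictAnti (fun i => f i + (i.rev : ℕ)) := by
  intro i j hij
  exact add_lt_add_of_le_of_lt (hf hij.le) (Fin.rev_strictAnti hij)

lemma sum_rev_val (n : ℕ) : ∑ i : Fin n, (i.rev : ℕ) = n * (n - 1) / 2 := by
  rw [← Finset.sum_range_id, ← Fin.sum_univ_eq_sum_range (fun i => i)]
  exact Equiv.sum_comp Fin.revPerm (fun i : Fin n => (i : ℕ))

lemma factorial_mul_card_antitoneTuples_le (n M : ℕ) :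
    n.factorial * (antitoneTuples n M).card ≤
      (Finset.Nat.antidiagonalTuple n (M + n * (n - 1) / 2)).card := by
  have hcard : n.factorial * (antitoneTuples n M).card =
      ((Finset.univ : Finset (Equiv.Perm (Fin n))) ×ˢ antitoneTuples n M).card := by
    simp [Finset.card_product, Fintype.card_perm]
  rw [hcard]
  refine Finset.card_le_card_of_injOn
    (fun p => (fun i => p.2 i + (i.rev : ℕ)) ∘ p.1) ?_ ?_
  · rintro ⟨σ, f⟩ h
    have h' := (mem_antitoneTuples.1 (by simpa using h : f ∈ antitoneTuples n M)).1
    simp only [Finset.mem_coe, Finset.Nat.mem_antidiagonalTuple]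
    rw [← h', ← sum_rev_val, ← Finset.sum_add_distrib]
    exact Equiv.sum_comp σ (fun i => f i + (i.rev : ℕ))
  · rintro ⟨σ, f⟩ h ⟨σ', f'⟩ h' heq
    have hf := strictAnti_add_staircase
      (mem_antitoneTuples.1 (by simpa using h : f ∈ antitoneTuples n M)).2
    have hf' := strictAnti_add_staircase
      (mem_antitoneTuples.1 (by simpa using h' : f' ∈ antitoneTuples n M)).2
    dsimp only at heq
    -- A strictly antitone tuple is determined by its set of values, which rearranging preserves.
    have hg : (fun i => f i + (i.rev : ℕ)) = (fun i => f' i + (i.rev : ℕ)) := by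
      rw [← hf.range_inj hf', ← σ.surjective.range_comp, heq, σ'.surjective.range_comp]
    have hff : f = f' := by
      funext i
      exact Nat.add_right_cancel (congrFun hg i)
    subst hff
    have hσ : σ = σ' := by
      ext1 i
      exact hf.injective (congrFun heq i)
    rw [hσ]

lemma partCount_eq_card_antitoneTuples {n D : ℕ} (h : n ≤ D) :
    partCount n D = (antitoneTuples n (D - n)).card := by
  unfold partCount
  refine Finset.card_bij (fun k _ i => (k i : ℕ) - 1) ?_ ?_ ?_
  · intro k hk
    obtain ⟨hanti, hpos, hsum⟩ := (Finset.mem_filter.1 hk).2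
    refine mem_antitoneTuples.2 ⟨?_, fun i j hij => Nat.sub_le_sub_right (hanti i j hij) 1⟩
    have : ∑ i, ((k i : ℕ) - 1) + n = D := by
      calc ∑ i, ((k i : ℕ) - 1) + n = ∑ i, (((k i : ℕ) - 1) + 1) := by
            simp [Finset.sum_add_distrib]
        _ = ∑ i, (k i : ℕ) := Finset.sum_congr rfl fun i _ => Nat.sub_add_cancel (hpos i)
        _ = D := hsum
    omega
  · intro k hk k' hk' heq
    have h1 := (Finset.mem_filter.1 hk).2.2.1
    have h2 := (Finset.mem_filter.1 hk').2.2.1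
    funext i
    have : (k i : ℕ) - 1 = (k' i : ℕ) - 1 := congrFun heq i
    have := h1 i
    have := h2 i
    apply Fin.ext
    omega
  · intro f hf
    obtain ⟨hsum, hanti⟩ := mem_antitoneTuples.1 hf
    have hsum' : ∑ i, (f i + 1) = D := by
      simp [Finset.sum_add_distrib, hsum, h]
    have hle (i : Fin n) : f i + 1 ≤ D := by
      rw [← hsum']
      exact Finset.single_le_sum (f := fun i => f i + 1) (fun _ _ => Nat.zero_le _)
        (Finset.mem_univ i)
    refine ⟨fun i => ⟨f i + 1, Nat.lt_succ_of_le (hle i)⟩, ?_, by simp⟩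
    simp only [Finset.mem_filter, Finset.mem_univ, true_and]
    exact ⟨fun i j hij => Nat.succ_le_succ (hanti hij), fun i => Nat.succ_pos _, hsum'⟩

lemma partCount_eq_zero {n D : ℕ} (h : D < n) : partCount n D = 0 := by
  unfold partCount
  rw [Finset.card_eq_zero, Finset.filter_eq_empty_iff]
  rintro k - ⟨-, hpos, hsum⟩
  have : ∑ _i : Fin n, 1 ≤ ∑ i, (k i : ℕ) := Finset.sum_le_sum fun i _ => hpos i
  simp at this
  omega

theorem partCount_bounds (ν D : ℕ) (hν : 1 ≤ ν) (hD : 1 ≤ D) :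
    ((D - 1).choose (ν - 1) : ℝ) / (Nat.factorial ν) ≤ (partCount ν D : ℝ) ∧
    (partCount ν D : ℝ) ≤
      ((D : ℝ) + (ν : ℝ) * ((ν : ℝ) - 1) / 2) ^ (ν - 1) /
        ((Nat.factorial ν) * (Nat.factorial (ν - 1))) := by
  obtain ⟨m, rfl⟩ : ∃ m, ν = m + 1 := ⟨ν - 1, by omega⟩
  have hfac : (0 : ℝ) < (m + 1).factorial := by exact_mod_cast Nat.factorial_pos _
  simp only [Nat.add_sub_cancel]
  rcases lt_or_ge D (m + 1) with hlt | hge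
  · rw [partCount_eq_zero hlt, Nat.choose_eq_zero_of_lt (by omega)]
    refine ⟨by simp, ?_⟩
    push_cast
    rw [add_sub_cancel_right]
    positivity
  · rw [partCount_eq_card_antitoneTuples hge]
    have hlow := card_tuples_le (m + 1) (D - (m + 1))
    have hupp := factorial_mul_card_antitoneTuples_le (m + 1) (D - (m + 1))
    rw [card_antidiagonalTuple] at hlow hupp
    rw [show D - (m + 1) + m = D - 1 by omega] at hlow
    set A := (antitoneTuples (m + 1) (D - (m + 1))).card
    refine ⟨?_, ?_⟩
    · rw [div_le_iff₀ hfac, mul_comm]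
      exact_mod_cast hlow
    · have hupp' : ((m + 1).factorial * A : ℕ) ≤ (D + (m + 1) * (m + 1 - 1) / 2).choose m :=
        hupp.trans (Nat.choose_le_choose m (by omega))
      have hcast : (((m + 1) * (m + 1 - 1) / 2 : ℕ) : ℝ) =
          ((m + 1 : ℕ) : ℝ) * (((m + 1 : ℕ) : ℝ) - 1) / 2 := by
        rw [Nat.cast_div (Nat.even_mul_pred_self (m + 1)).two_dvd (by norm_num)]
        push_cast [Nat.add_sub_cancel]
        ring
      have hpow := Nat.choose_le_pow_div (α := ℝ) m (D + (m + 1) * (m + 1 - 1) / 2)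
      rw [Nat.cast_add, hcast] at hpow
      have hreal : ((m + 1).factorial : ℝ) * A ≤
          ((D + (m + 1) * (m + 1 - 1) / 2).choose m : ℕ) := by exact_mod_cast hupp'
      rw [mul_comm ((m + 1).factorial : ℝ), ← div_div, le_div_iff₀ hfac, mul_comm (A : ℝ)]
      exact hreal.trans hpow
end

section
/- For every fixed integer ν ≥ 3, as D → ∞ along even integers, the cardinality of the slice E_T(ν, D) satisfies #E_T(ν, D) ~ D^{ν−2} / (2^{ν−2} · ((ν−1)!)²) · C(2ν−2, ν−2), i.e., the ratio of the two sides tends to 1. -/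
/-!
A tuple in the slice `E_T(ν, 2j)` with `p` positive and `q = ν - p` negative entries is the same
thing as a pair of partitions of `j`, one into exactly `p` parts and one into exactly `q` parts.
Hence `#E_T(ν, 2j) = ∑_{p + q = ν} P(j, p) P(j, q)` (`ncard_EsliceT`).

The number `P(n, p)` of partitions of `n` into `p = r + 1` parts satisfies
`C(n - 1, r) ≤ p! P(n, p) ≤ C(n + K + r, r)` with `K = 0 + 1 + ⋯ + r`: every composition is a
rearrangement of a sorted one, and adding the staircase `(0, 1, …, r)` to a sorted tuple makes its
`p!` rearrangements pairwise distinct. So `P(n, p) ~ n^(p-1) / (p! (p-1)!)`.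

Summing over `p`, the leading coefficient is `∑ 1 / (p! (p-1)! q! (q-1)!)`, which Vandermonde's
identity evaluates to `C(2ν-2, ν) / ((ν-1)!)²`, and `C(2ν-2, ν) = C(2ν-2, ν-2)`.
-/

/-- The slice `E_T(ν, D)`: weakly decreasing tuples `m ∈ ℤ^ν` with all entries
nonzero, total sum `0` and `ℓ¹`-norm exactly `D`. -/
def EsliceT (ν D : ℕ) : Set (Fin ν → ℤ) :=
  {m | (∀ i j : Fin ν, i ≤ j → m j ≤ m i) ∧ (∀ i, m i ≠ 0) ∧
    (∑ i, m i) = 0 ∧ (∑ i, |m i|) = (D : ℤ)}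

open Finset Filter Topology

/-- Partitions of `n` into exactly `p` positive parts, encoded as weakly increasing tuples. -/
def sortedParts (n p : ℕ) : Finset (Fin p → ℕ) :=
  open Classical in (piAntidiag univ n).filter (fun f => Monotone f ∧ ∀ i, 0 < f i)

lemma mem_sortedParts {n p : ℕ} {f : Fin p → ℕ} :
    f ∈ sortedParts n p ↔ ∑ i, f i = n ∧ Monotone f ∧ ∀ i, 0 < f i := by
  simp [sortedParts]

lemma card_weak_compositions (n r : ℕ) :
    (piAntidiag (univ : Finset (Fin (r + 1))) n).card = (n + r).choose r := by
  have e : {f : Fin (r + 1) → ℕ // ∑ i, f i = n} ≃ piAntidiag (univ : Finset (Fin (r + 1))) n :=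
    Equiv.subtypeEquivRight fun f => by simp
  rw [← Fintype.card_coe, ← Fintype.card_congr ((Sym.equivNatSumOfFintype (Fin (r + 1)) n).trans e),
    Sym.card_sym_eq_choose, Fintype.card_fin, show r + 1 + n - 1 = n + r by omega]
  exact Nat.choose_symm_add

/-- Every composition is a rearrangement of a partition. -/
lemma choose_le_card_sortedParts (n r : ℕ) (hn : r + 1 ≤ n) :
    (n - 1).choose r ≤ (sortedParts n (r + 1)).card * (r + 1).factorial := by
  have h1 : (piAntidiag (univ : Finset (Fin (r + 1))) (n - (r + 1))).card = (n - 1).choose r := by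
    rw [card_weak_compositions]; congr 1; omega
  have h2 : (sortedParts n (r + 1) ×ˢ (univ : Finset (Equiv.Perm (Fin (r + 1))))).card
      = (sortedParts n (r + 1)).card * (r + 1).factorial := by
    simp [card_product, Fintype.card_perm]
  rw [← h1, ← h2]
  refine card_le_card_of_surjOn (fun x i => x.1 (x.2 i) - 1) ?_
  intro g hg
  have hg' : ∑ i, g i = n - (r + 1) := by simpa using hg
  refine ⟨(fun i => g (Tuple.sort g i) + 1, (Tuple.sort g).symm), ?_, ?_⟩
  · simp only [coe_product, Set.mem_prod, mem_coe, mem_univ, and_true, mem_sortedParts]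
    refine ⟨?_, ?_, fun i => Nat.succ_pos _⟩
    · rw [sum_add_distrib, Equiv.sum_comp (Tuple.sort g) g, hg']
      simp; omega
    · intro a b hab
      exact Nat.succ_le_succ (Tuple.monotone_sort g hab)
  · funext i; simp

/-- Adding the staircase `(0, 1, …, r)` makes the tuple strictly increasing, so that its
rearrangements are pairwise distinct. -/
lemma card_sortedParts_le_choose (n r : ℕ) :
    (sortedParts n (r + 1)).card * (r + 1).factorial
      ≤ (n + (∑ i : Fin (r + 1), (i : ℕ)) + r).choose r := by
  have h2 : (sortedParts n (r + 1) ×ˢ (univ : Finset (Equiv.Perm (Fin (r + 1))))).card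
      = (sortedParts n (r + 1)).card * (r + 1).factorial := by
    simp [card_product, Fintype.card_perm]
  rw [← card_weak_compositions, ← h2]
  refine card_le_card_of_injOn (fun x i => x.1 (x.2 i) + (x.2 i : ℕ)) ?_ ?_
  · rintro ⟨f, σ⟩ hx
    simp only [coe_product, Set.mem_prod, mem_coe, mem_univ, and_true, mem_sortedParts] at hx
    simp only [mem_coe, mem_piAntidiag, mem_univ, implies_true, and_true]
    rw [Equiv.sum_comp σ (fun i => f i + (i : ℕ)), sum_add_distrib, hx.1]
  · rintro ⟨f, σ⟩ hx ⟨g, τ⟩ hy h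
    simp only [coe_product, Set.mem_prod, mem_coe, mem_univ, and_true, mem_sortedParts] at hx hy
    have strict : ∀ f : Fin (r + 1) → ℕ, Monotone f → StrictMono (fun i => f i + (i : ℕ)) :=
      fun f hf a b hab => add_lt_add_of_le_of_lt (hf hab.le) hab
    have hF := strict f hx.2.1
    have hG := strict g hy.2.1
    have h' : (fun i => f i + (i : ℕ)) ∘ σ = (fun i => g i + (i : ℕ)) ∘ τ := h
    have hr : (fun i => f i + (i : ℕ)) = (fun i => g i + (i : ℕ)) := by
      rw [← StrictMono.range_inj hF hG, ← σ.surjective.range_comp, h', τ.surjective.range_comp]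
    have hfg : f = g := by
      funext i
      have := congrFun hr i
      simpa using this
    subst hfg
    have : σ = τ := by
      ext1 i
      exact hF.injective (congrFun h' i)
    rw [this]

lemma tendsto_choose_shift (r c : ℕ) :
    Tendsto (fun n : ℕ => ((n + c).choose r : ℝ) / (n : ℝ) ^ r) atTop
      (𝓝 (1 / (r.factorial : ℝ))) := by
  have h1 : Tendsto (fun n : ℕ => (n.choose r : ℝ) / ((n : ℝ) ^ r / r.factorial)) atTop (𝓝 1) := by
    refine (Asymptotics.isEquivalent_iff_tendsto_one ?_).1 (isEquivalent_choose r)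
    filter_upwards [eventually_gt_atTop 0] with n hn
    positivity
  have h2 := h1.comp (tendsto_add_atTop_nat c)
  have h3 : Tendsto (fun n : ℕ => (((n + c : ℕ) : ℝ) / (n : ℝ)) ^ r) atTop (𝓝 1) := by
    have : Tendsto (fun n : ℕ => 1 + (c : ℝ) / (n : ℝ)) atTop (𝓝 (1 + 0)) :=
      tendsto_const_nhds.add (tendsto_const_div_atTop_nhds_zero_nat _)
    have h := this.pow r
    simp only [add_zero, one_pow] at h
    refine h.congr' ?_
    filter_upwards [eventually_gt_atTop 0] with n hn
    have : (n : ℝ) ≠ 0 := by positivity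
    congr 1
    push_cast
    field_simp
  have h4 := (h2.mul h3).mul_const (1 / (r.factorial : ℝ))
  simp only [mul_one, one_mul] at h4
  refine h4.congr' ?_
  filter_upwards [eventually_gt_atTop 0] with n hn
  have : (n : ℝ) ≠ 0 := by positivity
  have : ((n + c : ℕ) : ℝ) ≠ 0 := by positivity
  have : (r.factorial : ℝ) ≠ 0 := by positivity
  simp only [Function.comp]
  rw [div_pow]
  field_simp

lemma tendsto_card_sortedParts (r : ℕ) :
    Tendsto (fun n : ℕ => ((sortedParts n (r + 1)).card : ℝ) / (n : ℝ) ^ r) atTop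
      (𝓝 (1 / ((r + 1).factorial * r.factorial : ℝ))) := by
  have hf : (0 : ℝ) < (r + 1).factorial := by positivity
  have hlow : Tendsto (fun n : ℕ => ((n - 1).choose r : ℝ) / (n : ℝ) ^ r) atTop
      (𝓝 (1 / (r.factorial : ℝ))) := by
    rw [← tendsto_add_atTop_iff_nat 1]
    have h := (tendsto_choose_shift r 0).mul ((tendsto_natCast_div_add_atTop (1 : ℝ)).pow r)
    simp only [one_pow, mul_one] at h
    refine h.congr' ?_
    filter_upwards [eventually_gt_atTop 0] with n hn
    have : (n : ℝ) ≠ 0 := by positivity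
    rw [div_pow, add_zero, Nat.add_sub_cancel]
    push_cast
    field_simp
  have hup := tendsto_choose_shift r ((∑ i : Fin (r + 1), (i : ℕ)) + r)
  have key : Tendsto (fun n : ℕ =>
      ((sortedParts n (r + 1)).card * (r + 1).factorial : ℝ) / (n : ℝ) ^ r) atTop
      (𝓝 (1 / (r.factorial : ℝ))) := by
    refine tendsto_of_tendsto_of_tendsto_of_le_of_le' hlow hup ?_ ?_
    · filter_upwards [eventually_ge_atTop (r + 1)] with n hn
      gcongr
      exact_mod_cast choose_le_card_sortedParts n r hn
    · filter_upwards with n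
      gcongr
      rw [← add_assoc]
      exact_mod_cast card_sortedParts_le_choose n r
  have h := key.mul_const (1 / ((r + 1).factorial : ℝ))
  have e : (1 / (r.factorial : ℝ)) * (1 / ((r + 1).factorial : ℝ))
      = 1 / ((r + 1).factorial * r.factorial : ℝ) := by
    field_simp
  rw [e] at h
  refine h.congr fun n => ?_
  field_simp

lemma finite_EsliceT (ν D : ℕ) : (EsliceT ν D).Finite := by
  refine (Set.finite_Icc (fun _ : Fin ν => -(D : ℤ)) (fun _ => (D : ℤ))).subset ?_
  rintro m ⟨-, -, -, h⟩
  have : ∀ i, |m i| ≤ D := fun i => by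
    rw [← h]
    exact single_le_sum (f := fun i => |m i|) (fun i _ => abs_nonneg _) (mem_univ i)
  exact ⟨fun i => (abs_le.1 (this i)).1, fun i => (abs_le.1 (this i)).2⟩

/-- A tuple of the slice with `p` positive and `q` negative entries lists a partition of `j` into
`p` parts in decreasing order, followed by the negatives of a partition of `j` into `q` parts. -/
lemma ncard_EsliceT_pos (p q j : ℕ) :
    {m ∈ EsliceT (p + q) (2 * j) | (univ.filter (fun i => 0 < m i)).card = p}.ncard
      = (sortedParts j p).card * (sortedParts j q).card := by
  rw [← card_product, ← Set.ncard_coe_finset]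
  symm
  refine Set.ncard_congr
    (fun x _ => Fin.append (fun i => (x.1 i.rev : ℤ)) (fun i => -(x.2 i : ℤ))) ?_ ?_ ?_
  · rintro ⟨f, g⟩ hx
    simp only [coe_product, Set.mem_prod, mem_coe, mem_sortedParts] at hx
    obtain ⟨⟨hf, hfm, hf0⟩, hg, hgm, hg0⟩ := hx
    have hfs : ∑ i : Fin p, (f i.rev : ℤ) = j := by
      rw [← hf]; push_cast
      exact Equiv.sum_comp Fin.revPerm (fun i => (f i : ℤ))
    have hgs : ∑ i : Fin q, (g i : ℤ) = j := by rw [← hg]; push_cast; rfl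
    refine ⟨⟨?_, ?_, ?_, ?_⟩, ?_⟩
    · intro a b
      induction a using Fin.addCases with
      | left a =>
        induction b using Fin.addCases with
        | left b =>
          intro hab
          have hab' : a ≤ b := Fin.le_def.2 (Fin.le_def.1 hab)
          simpa using hfm (Fin.rev_le_rev.2 hab')
        | right b =>
          intro _
          simp only [Fin.append_left, Fin.append_right]
          omega
      | right a =>
        induction b using Fin.addCases with
        | left b =>
          intro hab
          simp [Fin.le_def] at hab
          omega
        | right b =>
          intro hab
          have hab' : a ≤ b := by
            have := Fin.le_def.1 hab
            simp only [Fin.val_natAdd] at this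
            exact Fin.le_def.2 (by omega)
          simpa using hgm hab'
    · intro i
      induction i using Fin.addCases with
      | left i => simpa using (hf0 _).ne'
      | right i => simpa using (hg0 _).ne'
    · simp [Fin.sum_univ_add, hfs, hgs]
    · simp [Fin.sum_univ_add, hfs, hgs]; ring
    · rw [card_filter, Fin.sum_univ_add]
      simp [hf0]
  · rintro ⟨f, g⟩ ⟨f', g'⟩ _ _ h
    simp only at h
    have h1 : f = f' := by
      funext i
      have := congrFun h (Fin.castAdd q i.rev)
      simpa using this
    have h2 : g = g' := by
      funext i
      have := congrFun h (Fin.natAdd p i)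
      simpa using this
    rw [h1, h2]
  · rintro m ⟨⟨hm, h0, hs, hD⟩, hp⟩
    have hanti : Antitone m := fun a b hab => hm a b hab
    have hlt : ∀ i : Fin (p + q), (i : ℕ) < p ↔ 0 < m i := fun i => by
      rw [← Tuple.lt_card_gt_iff_apply_gt_of_antitone (a := 0) (j := i) hanti, hp]
    have hposl : ∀ i : Fin p, 0 < m (Fin.castAdd q i) := fun i =>
      (hlt _).1 (by simp)
    have hnegr : ∀ i : Fin q, m (Fin.natAdd p i) < 0 := fun i => by
      have h1 : ¬ 0 < m (Fin.natAdd p i) := fun h => by simpa using (hlt _).2 h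
      exact lt_of_le_of_ne (not_lt.1 h1) (h0 _)
    rw [Fin.sum_univ_add] at hs hD
    have e1 : ∑ i : Fin p, |m (Fin.castAdd q i)| = ∑ i : Fin p, m (Fin.castAdd q i) :=
      sum_congr rfl fun i _ => abs_of_pos (hposl i)
    have e2 : ∑ i : Fin q, |m (Fin.natAdd p i)| = - ∑ i : Fin q, m (Fin.natAdd p i) := by
      rw [← sum_neg_distrib]
      exact sum_congr rfl fun i _ => abs_of_neg (hnegr i)
    push_cast at hD
    have s1 : ∑ i : Fin p, |m (Fin.castAdd q i)| = j := by linarith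
    have s2 : ∑ i : Fin q, |m (Fin.natAdd p i)| = j := by linarith
    refine ⟨(fun i => (m (Fin.castAdd q i.rev)).natAbs, fun i => (m (Fin.natAdd p i)).natAbs), ?_, ?_⟩
    · simp only [coe_product, Set.mem_prod, mem_coe, mem_sortedParts]
      refine ⟨⟨?_, ?_, fun i => Int.natAbs_pos.2 (h0 _)⟩, ?_, ?_, fun i => Int.natAbs_pos.2 (h0 _)⟩
      · zify
        rw [← s1]
        exact Equiv.sum_comp Fin.revPerm (fun i => |m (Fin.castAdd q i)|)
      · intro a b hab
        have h1 := hposl a.rev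
        have h2 := hposl b.rev
        have h3 : m (Fin.castAdd q a.rev) ≤ m (Fin.castAdd q b.rev) :=
          hm _ _ (by simpa [Fin.le_def] using Fin.rev_le_rev.2 hab)
        simp only
        omega
      · zify
        exact s2
      · intro a b hab
        have h1 := hnegr a
        have h2 := hnegr b
        have h3 : m (Fin.natAdd p b) ≤ m (Fin.natAdd p a) :=
          hm _ _ (Fin.le_def.2 (Nat.add_le_add_left (Fin.le_def.1 hab) p))
        simp only
        omega
    · funext i
      induction i using Fin.addCases with
      | left i => simpa using (hposl i).le
      | right i => simp [abs_of_neg (hnegr i)]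

lemma ncard_EsliceT (ν j : ℕ) :
    (EsliceT ν (2 * j)).ncard
      = ∑ x ∈ antidiagonal ν, (sortedParts j x.1).card * (sortedParts j x.2).card := by
  classical
  have hfin := finite_EsliceT ν (2 * j)
  rw [Set.ncard_eq_toFinset_card _ hfin,
    card_eq_sum_card_fiberwise (t := antidiagonal ν)
      (f := fun m => ((univ.filter (fun i => 0 < m i)).card,
        ν - (univ.filter (fun i => 0 < m i)).card))]
  · refine sum_congr rfl ?_
    rintro ⟨p, q⟩ hpq
    obtain rfl : p + q = ν := by simpa using hpq
    rw [← ncard_EsliceT_pos, ← Set.ncard_coe_finset]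
    congr 1
    ext m
    simp only [coe_filter, Set.Finite.mem_toFinset, Set.mem_ofPred_eq, Prod.mk.injEq,
      and_congr_right_iff]
    intro _
    omega
  · intro m _
    have : (univ.filter (fun i => 0 < m i)).card ≤ ν := by
      simpa using card_filter_le (univ : Finset (Fin ν)) (fun i => 0 < m i)
    simp; omega

/-- The limit of `P(n, p) / n^(p-1)`. -/
noncomputable def partCoeff : ℕ → ℝ
  | 0 => 0
  | r + 1 => 1 / ((r + 1).factorial * r.factorial : ℝ)

lemma partCoeff_mul (μ p q : ℕ) (h : p + q = μ + 1) :
    partCoeff p * partCoeff q = (μ.choose p * μ.choose q : ℝ) / (μ.factorial : ℝ) ^ 2 := by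
  rcases p with _ | p
  · obtain rfl : q = μ + 1 := by omega
    simp [partCoeff]
  rcases q with _ | q
  · obtain rfl : p = μ := by omega
    simp [partCoeff]
  obtain rfl : μ = p + q + 1 := by omega
  rw [Nat.cast_choose ℝ (by omega : p + 1 ≤ p + q + 1),
    Nat.cast_choose ℝ (by omega : q + 1 ≤ p + q + 1),
    show p + q + 1 - (p + 1) = q by omega, show p + q + 1 - (q + 1) = p by omega]
  simp only [partCoeff]
  have := Nat.factorial_ne_zero (p + q + 1)
  field_simp

lemma sum_partCoeff (ν : ℕ) (hν : 2 ≤ ν) :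
    ∑ x ∈ antidiagonal ν, partCoeff x.1 * partCoeff x.2
      = ((2 * ν - 2).choose (ν - 2) : ℝ) / ((ν - 1).factorial : ℝ) ^ 2 := by
  obtain ⟨μ, rfl⟩ : ∃ μ, ν = μ + 1 := ⟨ν - 1, by omega⟩
  rw [sum_congr rfl fun x hx => partCoeff_mul μ x.1 x.2 (mem_antidiagonal.1 hx), ← sum_div]
  have h : (2 * (μ + 1) - 2).choose (μ + 1 - 2) = (μ + μ).choose (μ + 1) := by
    rw [show 2 * (μ + 1) - 2 = μ + μ by omega]
    exact (Nat.choose_symm_of_eq_add (by omega)).symm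
  rw [h, Nat.add_choose_eq]
  push_cast
  rfl

lemma sortedParts_zero (j : ℕ) (hj : 0 < j) : sortedParts j 0 = ∅ := by
  ext f
  simp [mem_sortedParts]
  omega

lemma tendsto_term (ν p q : ℕ) (h : p + q = ν) (hν : 2 ≤ ν) :
    Tendsto (fun j : ℕ => ((sortedParts j p).card * (sortedParts j q).card : ℝ) /
      (j : ℝ) ^ (ν - 2)) atTop (𝓝 (partCoeff p * partCoeff q)) := by
  rcases p with _ | p
  · refine tendsto_const_nhds.congr' ?_
    filter_upwards [eventually_gt_atTop 0] with j hj
    simp [sortedParts_zero j hj, partCoeff]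
  rcases q with _ | q
  · refine tendsto_const_nhds.congr' ?_
    filter_upwards [eventually_gt_atTop 0] with j hj
    simp [sortedParts_zero j hj, partCoeff]
  refine ((tendsto_card_sortedParts p).mul (tendsto_card_sortedParts q)).congr fun j => ?_
  rw [show ν - 2 = p + q by omega, pow_add, div_mul_div_comm]

/-- As `D → ∞` along the even integers `D = 2j`,
`#E_T(ν, D) ~ D^(ν−2) / (2^(ν−2) ((ν−1)!)²) · C(2ν−2, ν−2)` for fixed `ν ≥ 3`. -/
theorem EsliceT_asymptotics (ν : ℕ) (hν : 3 ≤ ν) :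
    Filter.Tendsto
      (fun j : ℕ =>
        ((EsliceT ν (2 * j)).ncard : ℝ) /
          (((2 * j : ℕ) : ℝ) ^ (ν - 2) / (2 ^ (ν - 2) * (Nat.factorial (ν - 1)) ^ 2)
            * (Nat.choose (2 * ν - 2) (ν - 2))))
      Filter.atTop (nhds 1) := by
  have h1 : Tendsto (fun j : ℕ => ((EsliceT ν (2 * j)).ncard : ℝ) / (j : ℝ) ^ (ν - 2)) atTop
      (𝓝 (((2 * ν - 2).choose (ν - 2) : ℝ) / ((ν - 1).factorial : ℝ) ^ 2)) := by
    rw [← sum_partCoeff ν (by omega)]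
    refine (tendsto_finsetSum _ fun x hx =>
      tendsto_term ν x.1 x.2 (mem_antidiagonal.1 hx) (by omega)).congr fun j => ?_
    rw [ncard_EsliceT, ← sum_div]
    push_cast
    rfl
  have hc : ((2 * ν - 2).choose (ν - 2) : ℝ) ≠ 0 := by
    exact_mod_cast (Nat.choose_pos (by omega)).ne'
  have hfac : ((ν - 1).factorial : ℝ) ≠ 0 := by positivity
  have h2 := h1.div_const (((2 * ν - 2).choose (ν - 2) : ℝ) / ((ν - 1).factorial : ℝ) ^ 2)
  rw [div_self (by positivity)] at h2
  refine h2.congr fun j => ?_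
  rw [div_div]
  congr 1
  push_cast
  rw [mul_pow]
  field_simp
end

section
/- For every fixed integer ν ≥ 3, the cardinality of K_T(ν, D) satisfies #K_T(ν, D) ~ D^{ν−1} / (2(ν−1) · 2^{ν−2} · ((ν−1)!)²) · C(2ν−2, ν−2) as D → ∞, i.e., the ratio of the two sides tends to 1. -/
/-!
Dropping the ordering condition leaves the set `zeroSumBall ν D` of all integer tuples with sum `0`
and `ℓ¹`-norm at most `D`. Every such tuple is a rearrangement of a decreasing one, so
`#zeroSumBall ν D ≤ ν! · #K_T(ν, D)`. Conversely, adding `ρ = (ν - 1, ν - 3, …, 1 - ν)` makes a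
decreasing tuple strictly decreasing, hence gives it `ν!` distinct rearrangements, and raises the
norm by at most `ν²`: `ν! · #K_T(ν, D) ≤ #zeroSumBall ν (D + ν²)`. So it suffices to find the
asymptotics of `#zeroSumBall ν D` and to divide by `ν!`.

That number is computed exactly in `ncard_zeroSumBall`. The tuples with positive entries exactly at
the positions in a set `S` of size `a`, summing to `p`, number `C(p - 1, a - 1) C(ν - a + p - 1, p)`
(stars and bars, with `a, ν - a ≥ 1` and `p ≥ a`), and their norm is `2p`, so `p` runs over
`p ≤ D / 2`. Each count is
`~ p ^ (ν - 2) / ((a - 1)! (ν - a - 1)!)`; the sum over `S` is `~ C(2ν - 2, ν - 1) p ^ (ν - 2) /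
(ν - 2)!` by Vandermonde, and the sum over `p` (`tendsto_sum_div_pow`) yields
`C(2ν - 2, ν - 1) (D / 2) ^ (ν - 1) / (ν - 1)!`.
-/

/-- `K_T(ν, D)`: weakly decreasing tuples `m ∈ ℤ^ν` with total sum `0`
and `ℓ¹`-norm at most `D`. -/
def KsetT (ν D : ℕ) : Set (Fin ν → ℤ) :=
  {m | (∀ i j : Fin ν, i ≤ j → m j ≤ m i) ∧ (∑ i, m i) = 0 ∧ (∑ i, |m i|) ≤ (D : ℤ)}

open Filter Topology Finset Asymptotics

/-! ### Asymptotics of binomial coefficients and of power-like sums -/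

lemma tendsto_choose_div_pow (k : ℕ) :
    Tendsto (fun n : ℕ => (n.choose k : ℝ) / (n : ℝ) ^ k) atTop (𝓝 (1 / k.factorial)) := by
  have h := isEquivalent_choose k
  have h2 : ∀ᶠ n : ℕ in atTop, ((n : ℝ) ^ k / k.factorial) ≠ 0 := by
    filter_upwards [eventually_gt_atTop 0] with n hn
    positivity
  rw [isEquivalent_iff_tendsto_one h2] at h
  have h3 := h.mul_const (1 / (k.factorial : ℝ))
  rw [one_mul] at h3
  refine h3.congr' ?_
  filter_upwards [eventually_gt_atTop 0] with n hn
  simp only [Pi.div_apply]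
  field_simp

lemma tendsto_choose_div_pow_of_tendsto (k : ℕ) (u : ℕ → ℕ)
    (hu : Tendsto (fun n => (u n : ℝ) / n) atTop (𝓝 1)) :
    Tendsto (fun n : ℕ => ((u n).choose k : ℝ) / (n : ℝ) ^ k) atTop (𝓝 (1 / k.factorial)) := by
  have hu' : Tendsto u atTop atTop := by
    rw [← tendsto_natCast_atTop_iff (R := ℝ)]
    refine (hu.pos_mul_atTop one_pos (tendsto_natCast_atTop_atTop (R := ℝ))).congr' ?_
    filter_upwards [eventually_gt_atTop 0] with n hn
    field_simp
  have h := ((tendsto_choose_div_pow k).comp hu').mul (hu.pow k)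
  rw [one_pow, mul_one] at h
  refine h.congr' ?_
  filter_upwards [eventually_gt_atTop 0, hu'.eventually_gt_atTop 0] with n hn hn'
  simp only [Function.comp_apply]
  rw [div_pow]
  field_simp

lemma tendsto_add_div (r : ℕ) :
    Tendsto (fun n : ℕ => ((n + r : ℕ) : ℝ) / n) atTop (𝓝 1) := by
  have h : Tendsto (fun n : ℕ => 1 + (r : ℝ) / n) atTop (𝓝 (1 + 0)) :=
    tendsto_const_nhds.add (tendsto_const_div_atTop_nhds_zero_nat _)
  rw [add_zero] at h
  refine h.congr' ?_
  filter_upwards [eventually_gt_atTop 0] with n hn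
  push_cast
  field_simp

lemma tendsto_sub_one_div :
    Tendsto (fun n : ℕ => ((n - 1 : ℕ) : ℝ) / n) atTop (𝓝 1) := by
  have h : Tendsto (fun n : ℕ => 1 - (1 : ℝ) / n) atTop (𝓝 (1 - 0)) :=
    tendsto_const_nhds.sub (tendsto_const_div_atTop_nhds_zero_nat _)
  rw [sub_zero] at h
  refine h.congr' ?_
  filter_upwards [eventually_gt_atTop 0] with n hn
  rw [Nat.cast_sub (by omega)]
  push_cast
  field_simp

lemma sum_range_choose_col (n k : ℕ) : ∑ p ∈ range n, p.choose k = n.choose (k + 1) := by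
  induction n with
  | zero => simp
  | succ n ih => rw [sum_range_succ, ih, Nat.choose_succ_succ', add_comm]

/-- If `b p ~ c * p ^ k` then `∑ p < n, b p ~ c * n ^ (k + 1) / (k + 1)`: compare `b` with the
multiple `c * k! * C(p, k)`, whose partial sums are `c * k! * C(n, k + 1)`. -/
lemma tendsto_sum_div_pow (k : ℕ) (b : ℕ → ℝ) (c : ℝ)
    (hb : Tendsto (fun p : ℕ => b p / (p : ℝ) ^ k) atTop (𝓝 c)) :
    Tendsto (fun n : ℕ => (∑ p ∈ range n, b p) / (n : ℝ) ^ (k + 1)) atTop (𝓝 (c / (k + 1))) := by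
  have hk : (k.factorial : ℝ) ≠ 0 := by positivity
  have hdiff : (fun p : ℕ => b p - c * k.factorial * (p.choose k : ℝ)) =o[atTop]
      fun p : ℕ => (p.choose k : ℝ) := by
    have h1 : (fun p : ℕ => b p - c * k.factorial * (p.choose k : ℝ)) =o[atTop]
        fun p : ℕ => (p : ℝ) ^ k := by
      rw [isLittleO_iff_tendsto' ?_]
      · have h := hb.sub ((tendsto_choose_div_pow k).const_mul (c * k.factorial))
        rw [show c - c * k.factorial * (1 / k.factorial) = 0 by field_simp; ring] at h
        refine h.congr fun p => ?_
        ring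
      · filter_upwards [eventually_gt_atTop 0] with n hn h
        exact absurd h (by positivity)
    exact h1.trans_isTheta (isTheta_choose k).symm
  have hsum : ∀ n : ℕ, ∑ p ∈ range n, (p.choose k : ℝ) = (n.choose (k + 1) : ℝ) := by
    intro n
    rw [← sum_range_choose_col]
    push_cast
    rfl
  have hch := tendsto_choose_div_pow (k + 1)
  have h2 := hdiff.sum_range (fun p => by positivity) (by
    simp only [hsum]
    refine (hch.pos_mul_atTop (by positivity)
      ((tendsto_pow_atTop (n := k + 1) (by omega)).comp
        (tendsto_natCast_atTop_atTop (R := ℝ)))).congr' ?_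
    filter_upwards [eventually_gt_atTop 0] with n hn
    simp only [Function.comp_apply]
    field_simp)
  simp only [sum_sub_distrib, ← mul_sum, hsum] at h2
  have h3 := (h2.trans_isTheta (isTheta_choose (k + 1))).tendsto_div_nhds_zero
  have h4 := h3.add (hch.const_mul (c * k.factorial))
  have he : 0 + c * k.factorial * (1 / (k + 1).factorial) = c / (k + 1) := by
    rw [Nat.factorial_succ]
    push_cast
    field_simp
    ring
  rw [he] at h4
  refine h4.congr fun n => ?_
  ring

/-! ### Comparison of ordered and unordered tuples -/

/-- All integer tuples with sum `0` and `ℓ¹`-norm at most `D`, without the ordering condition. -/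
def zeroSumBall (ν D : ℕ) : Set (Fin ν → ℤ) :=
  {m | (∑ i, m i) = 0 ∧ (∑ i, |m i|) ≤ (D : ℤ)}

lemma zeroSumBall_finite (ν D : ℕ) : (zeroSumBall ν D).Finite := by
  refine (Set.finite_Icc (fun _ : Fin ν => -(D : ℤ)) (fun _ => (D : ℤ))).subset ?_
  rintro m ⟨-, h⟩
  have h1 : ∀ i, |m i| ≤ D := fun i =>
    (single_le_sum (f := fun i => |m i|) (fun j _ => abs_nonneg _) (mem_univ i)).trans h
  exact ⟨fun i => (abs_le.1 (h1 i)).1, fun i => (abs_le.1 (h1 i)).2⟩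

lemma KsetT_subset (ν D : ℕ) : KsetT ν D ⊆ zeroSumBall ν D := fun _ h => h.2

/-- Every tuple is a rearrangement of a decreasing one. -/
lemma ncard_zeroSumBall_le (ν D : ℕ) :
    (zeroSumBall ν D).ncard ≤ ν.factorial * (KsetT ν D).ncard := by
  have hfin : (KsetT ν D).Finite := (zeroSumBall_finite ν D).subset (KsetT_subset ν D)
  have hsub : zeroSumBall ν D ⊆
      (fun x : Equiv.Perm (Fin ν) × (Fin ν → ℤ) => x.2 ∘ x.1) '' (Set.univ ×ˢ KsetT ν D) := by
    rintro m ⟨h0, h1⟩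
    set σ := Tuple.sort (fun i => -m i) with hσ
    have hmono : Monotone ((fun i => -m i) ∘ σ) := Tuple.monotone_sort _
    refine ⟨(σ⁻¹, m ∘ σ), ⟨Set.mem_univ _, ?_, ?_, ?_⟩, ?_⟩
    · intro i j hij
      have := hmono hij
      simp only [Function.comp_apply] at this ⊢
      omega
    · rw [← h0]
      exact Equiv.sum_comp σ m
    · refine le_trans (le_of_eq ?_) h1
      exact Equiv.sum_comp σ (fun i => |m i|)
    · funext i
      simp
  have hprod : (Set.univ ×ˢ KsetT ν D : Set (Equiv.Perm (Fin ν) × (Fin ν → ℤ))).Finite :=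
    Set.finite_univ.prod hfin
  calc (zeroSumBall ν D).ncard ≤ _ := Set.ncard_le_ncard hsub (hprod.image _)
    _ ≤ _ := Set.ncard_image_le hprod
    _ = _ := by
      rw [Set.ncard_prod, Set.ncard_univ, Nat.card_eq_fintype_card, Fintype.card_perm,
        Fintype.card_fin]

/-- The strictly decreasing shift `ρ = (ν - 1, ν - 3, …, 1 - ν)`, with sum zero. -/
def rhoShift (ν : ℕ) (i : Fin ν) : ℤ := (ν : ℤ) - 1 - 2 * (i : ℤ)

lemma sum_rhoShift (ν : ℕ) : ∑ i, rhoShift ν i = 0 := by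
  have h : ∑ i : Fin ν, (i : ℤ) = ∑ i ∈ range ν, (i : ℤ) :=
    Fin.sum_univ_eq_sum_range (fun i => (i : ℤ)) ν
  have h2 : 2 * ∑ i ∈ range ν, (i : ℤ) = ν * (ν - 1) := by
    induction ν with
    | zero => simp
    | succ n ih =>
      rw [sum_range_succ, mul_add, ih (Fin.sum_univ_eq_sum_range (fun i => (i : ℤ)) n)]
      push_cast
      ring
  simp only [rhoShift, sum_sub_distrib, ← mul_sum, h, h2]
  simp
  ring

lemma sum_abs_rhoShift_le (ν : ℕ) : ∑ i, |rhoShift ν i| ≤ (ν * ν : ℕ) := by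
  calc ∑ i, |rhoShift ν i| ≤ ∑ _i : Fin ν, (ν : ℤ) := by
        refine sum_le_sum fun i _ => ?_
        have := i.2
        rw [rhoShift, abs_le]
        omega
    _ = _ := by simp

/-- Adding `ρ` makes a decreasing tuple strictly decreasing at the cost of at most `ν²` in norm,
and all `ν!` rearrangements of a strictly decreasing tuple are distinct. -/
lemma le_ncard_zeroSumBall (ν D : ℕ) :
    ν.factorial * (KsetT ν D).ncard ≤ (zeroSumBall ν (D + ν * ν)).ncard := by
  let f : Equiv.Perm (Fin ν) × (Fin ν → ℤ) → (Fin ν → ℤ) := fun x => (x.2 + rhoShift ν) ∘ x.1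
  have hanti : ∀ m ∈ KsetT ν D, StrictAnti (m + rhoShift ν) := by
    intro m hm i j hij
    have h1 := hm.1 i j hij.le
    have h2 : (i : ℕ) < (j : ℕ) := hij
    simp only [Pi.add_apply, rhoShift]
    omega
  have hinj : Set.InjOn f (Set.univ ×ˢ KsetT ν D) := by
    rintro ⟨σ, m⟩ ⟨-, hm⟩ ⟨τ, n⟩ ⟨-, hn⟩ h
    simp only [f] at h
    have hr : Set.range (m + rhoShift ν) = Set.range (n + rhoShift ν) := by
      rw [← EquivLike.range_comp (m + rhoShift ν) σ, h, EquivLike.range_comp]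
    have he := ((hanti m hm).range_inj (hanti n hn)).1 hr
    have hmn : m = n := add_right_cancel he
    subst hmn
    have hστ : σ = τ := by
      ext1 i
      exact (hanti m hm).injective (congrFun h i)
    rw [hστ]
  have hmaps : f '' (Set.univ ×ˢ KsetT ν D) ⊆ zeroSumBall ν (D + ν * ν) := by
    rintro _ ⟨⟨σ, m⟩, ⟨-, hm⟩, rfl⟩
    refine ⟨?_, ?_⟩
    · rw [show ∑ i, f (σ, m) i = ∑ i, (m + rhoShift ν) i from
        Equiv.sum_comp σ (m + rhoShift ν)]
      simp only [Pi.add_apply, sum_add_distrib, hm.2.1, sum_rhoShift, add_zero]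
    · rw [show ∑ i, |f (σ, m) i| = ∑ i, |(m + rhoShift ν) i| from
        Equiv.sum_comp σ (fun i => |(m + rhoShift ν) i|)]
      calc ∑ i, |(m + rhoShift ν) i| ≤ ∑ i, (|m i| + |rhoShift ν i|) :=
            sum_le_sum fun i _ => abs_add_le _ _
        _ ≤ _ := by
          rw [sum_add_distrib, Nat.cast_add]
          exact add_le_add hm.2.2 (sum_abs_rhoShift_le ν)
  have h := Set.ncard_le_ncard hmaps (zeroSumBall_finite _ _)
  rwa [hinj.ncard_image, Set.ncard_prod, Set.ncard_univ, Nat.card_eq_fintype_card,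
    Fintype.card_perm, Fintype.card_fin] at h

/-! ### Exact count of the unordered tuples -/

lemma card_piAntidiag_eq {ι : Type*} [DecidableEq ι] (s : Finset ι) (n : ℕ) :
    #(s.piAntidiag n) = (#s + n - 1).choose n := by
  rw [← card_finsuppAntidiag_nat_eq_choose, finsuppAntidiag, card_map, card_attach]

/-- The number of integer `ν`-tuples with a prescribed set of `a` positive entries (summing to `p`),
the other `ν - a` entries being nonpositive and summing to `-p`. -/
def signCount (ν p a : ℕ) : ℕ :=
  if a ≤ p then (a + (p - a) - 1).choose (p - a) * (ν - a + p - 1).choose p else 0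

/-- The tuples counted by `signCount`: `S` is the set of positions of positive entries. -/
def signSet (ν p : ℕ) (S : Finset (Fin ν)) : Set (Fin ν → ℤ) :=
  {m | (∀ i, i ∈ S ↔ 0 < m i) ∧ ∑ i ∈ S, m i = p ∧ ∑ i ∈ Sᶜ, m i = -(p : ℤ)}

lemma ncard_signSet (ν p : ℕ) (S : Finset (Fin ν)) :
    (signSet ν p S).ncard = signCount ν p #S := by
  unfold signCount
  split_ifs with h
  · let f : (Fin ν → ℕ) × (Fin ν → ℕ) → (Fin ν → ℤ) :=
      fun x i => if i ∈ S then (x.1 i : ℤ) + 1 else -(x.2 i : ℤ)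
    have himg : signSet ν p S =
        f '' ((S.piAntidiag (p - #S) ×ˢ Sᶜ.piAntidiag p : Finset _) : Set _) := by
      ext m
      constructor
      · rintro ⟨h0, h1, h2⟩
        refine ⟨(fun i => (m i - 1).toNat, fun i => (-m i).toNat), ?_, ?_⟩
        · simp only [coe_product, Set.mem_prod, mem_coe, mem_piAntidiag]
          refine ⟨⟨?_, ?_⟩, ?_, ?_⟩
          · zify [h]
            rw [← h1, card_eq_sum_ones, Nat.cast_sum, ← sum_sub_distrib]
            refine sum_congr rfl fun i hi => ?_
            have := (h0 i).1 hi
            push_cast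
            omega
          · intro i hi
            rw [h0]
            omega
          · zify
            rw [← neg_eq_iff_eq_neg] at h2
            rw [← h2, ← sum_neg_distrib]
            refine sum_congr rfl fun i hi => ?_
            have := (h0 i).not.1 (mem_compl.1 hi)
            omega
          · intro i hi
            rw [mem_compl, h0]
            omega
        · funext i
          simp only [f]
          have := h0 i
          split_ifs with hi
          · have := this.1 hi
            omega
          · have := this.not.1 hi
            omega
      · rintro ⟨⟨x, y⟩, hxy, rfl⟩
        simp only [coe_product, Set.mem_prod, mem_coe, mem_piAntidiag] at hxy
        obtain ⟨⟨hx, -⟩, hy, -⟩ := hxy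
        refine ⟨fun i => ?_, ?_, ?_⟩
        · simp only [f]
          split_ifs with hi <;> simp only [hi, true_iff, false_iff] <;> omega
        · rw [sum_congr rfl (g := fun i => (x i : ℤ) + 1) fun i hi => if_pos hi,
            sum_add_distrib, ← Nat.cast_sum, hx]
          simp
          omega
        · rw [sum_congr rfl (g := fun i => -(y i : ℤ)) fun i hi => if_neg (mem_compl.1 hi),
            sum_neg_distrib, ← Nat.cast_sum, hy]
    have hinj : Set.InjOn f ((S.piAntidiag (p - #S) ×ˢ Sᶜ.piAntidiag p : Finset _) : Set _) := by
      rintro ⟨x, y⟩ hxy ⟨x', y'⟩ hxy' he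
      simp only [coe_product, Set.mem_prod, mem_coe, mem_piAntidiag, mem_compl] at hxy hxy'
      obtain ⟨⟨-, hx⟩, -, hy⟩ := hxy
      obtain ⟨⟨-, hx'⟩, -, hy'⟩ := hxy'
      rw [Prod.mk.injEq]
      constructor <;> funext i <;> have hi := congrFun he i <;> simp only [f] at hi <;>
        specialize hx i <;> specialize hx' i <;> specialize hy i <;> specialize hy' i <;>
        by_cases hS : i ∈ S <;> simp_all
    rw [himg, hinj.ncard_image, Set.ncard_coe_finset, card_product, card_piAntidiag_eq,
      card_piAntidiag_eq, card_compl, Fintype.card_fin]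
  · rw [Set.ncard_eq_zero ((zeroSumBall_finite ν (2 * p)).subset ?_)]
    · rw [Set.eq_empty_iff_forall_notMem]
      rintro m ⟨h0, h1, -⟩
      have : ∑ i ∈ S, (1 : ℤ) ≤ ∑ i ∈ S, m i := sum_le_sum fun i hi => (h0 i).1 hi
      rw [h1] at this
      simp at this
      omega
    · rintro m ⟨h0, h1, h2⟩
      refine ⟨?_, ?_⟩
      · rw [← sum_add_sum_compl S, h1, h2]
        ring
      · rw [← sum_add_sum_compl S, sum_congr rfl fun i hi => abs_of_pos ((h0 i).1 hi),
          sum_congr rfl fun i hi => abs_of_nonpos (not_lt.1 ((h0 i).not.1 (mem_compl.1 hi))),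
          sum_neg_distrib, h1, h2]
        push_cast
        linarith

/-- Classification of the tuples by the positions and the sum `p` of the positive entries: the sum
condition makes the negative entries sum to `-p`, so the norm is `2 * p`. -/
lemma ncard_zeroSumBall (ν D : ℕ) :
    (zeroSumBall ν D).ncard =
      ∑ p ∈ range (D / 2 + 1), ∑ S : Finset (Fin ν), signCount ν p #S := by
  classical
  let A := (zeroSumBall_finite ν D).toFinset
  let g : (Fin ν → ℤ) → ℕ × Finset (Fin ν) :=
    fun m => ((∑ i with 0 < m i, m i).toNat, univ.filter fun i => 0 < m i)
  have key : ∀ m : Fin ν → ℤ, ∑ i, m i = 0 → 0 ≤ ∑ i with 0 < m i, m i ∧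
      ∑ i ∈ (univ.filter fun i => 0 < m i)ᶜ, m i = -∑ i with 0 < m i, m i ∧
      ∑ i, |m i| = 2 * ∑ i with 0 < m i, m i := by
    intro m hm
    have h1 := sum_add_sum_compl (univ.filter fun i => 0 < m i) m
    have h2 := sum_add_sum_compl (univ.filter fun i => 0 < m i) fun i => |m i|
    rw [sum_congr rfl fun i hi => abs_of_pos (mem_filter.1 hi).2,
      sum_congr (s₁ := (univ.filter fun i => 0 < m i)ᶜ) rfl fun i hi =>
        abs_of_nonpos (a := m i) (by simpa using hi), sum_neg_distrib] at h2
    refine ⟨sum_nonneg fun i hi => (mem_filter.1 hi).2.le, ?_, ?_⟩ <;> linarith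
  have hA : (zeroSumBall ν D).ncard = #A :=
    Set.ncard_eq_toFinset_card _ (zeroSumBall_finite ν D)
  have hmaps : (A : Set (Fin ν → ℤ)).MapsTo g
      (range (D / 2 + 1) ×ˢ (univ : Finset (Finset (Fin ν))) : Finset _) := by
    intro m hm
    have hm : m ∈ zeroSumBall ν D := by simpa [A] using hm
    obtain ⟨k1, k2, k3⟩ := key m hm.1
    have hm2 := hm.2
    rw [k3] at hm2
    simp only [coe_product, Set.mem_prod, mem_coe, mem_range, mem_univ, and_true, g]
    omega
  rw [hA, card_eq_sum_card_fiberwise hmaps, sum_product]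
  refine sum_congr rfl fun p hp => sum_congr rfl fun S _ => ?_
  rw [← ncard_signSet, ← Set.ncard_coe_finset]
  congr 1
  ext m
  have hp := mem_range.1 hp
  simp only [coe_filter, Set.mem_ofPred_eq, A, Set.Finite.mem_toFinset, g, Prod.mk.injEq]
  constructor
  · rintro ⟨hm, h1, rfl⟩
    obtain ⟨k1, k2, k3⟩ := key m hm.1
    refine ⟨fun i => by simp, by omega, by omega⟩
  · rintro ⟨h0, h1, h2⟩
    have hS : (univ.filter fun i => 0 < m i) = S := by
      ext i
      simp [h0]
    have h3 : ∑ i, m i = 0 := by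
      rw [← sum_add_sum_compl S, h1, h2]
      ring
    obtain ⟨k1, k2, k3⟩ := key m h3
    rw [hS] at k3 ⊢
    refine ⟨⟨h3, by omega⟩, by omega, rfl⟩

/-! ### Passage to the limit -/

/-- The limit of `signCount (k + 2) p a / p ^ k`; it vanishes when all entries have one sign. -/
noncomputable def signLimit (k a : ℕ) : ℝ :=
  if 1 ≤ a ∧ a ≤ k + 1 then 1 / ((a - 1).factorial * (k + 1 - a).factorial : ℝ) else 0

lemma tendsto_signCount (k a : ℕ) (ha : a ≤ k + 2) :
    Tendsto (fun p : ℕ => (signCount (k + 2) p a : ℝ) / (p : ℝ) ^ k) atTop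
      (𝓝 (signLimit k a)) := by
  unfold signLimit
  split_ifs with h
  · obtain ⟨i, rfl⟩ : ∃ i, a = i + 1 := ⟨a - 1, by omega⟩
    obtain ⟨j, rfl⟩ : ∃ j, k = i + j := ⟨k - i, by omega⟩
    have h1 := tendsto_choose_div_pow_of_tendsto i _ tendsto_sub_one_div
    have h2 := tendsto_choose_div_pow_of_tendsto j _ (tendsto_add_div j)
    have h3 := h1.mul h2
    rw [one_div_mul_one_div] at h3
    rw [show i + 1 - 1 = i by omega, show i + j + 1 - (i + 1) = j by omega]
    refine h3.congr' ?_
    filter_upwards [eventually_ge_atTop (i + 1)] with p hp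
    have e1 : (i + 1 + (p - (i + 1)) - 1).choose (p - (i + 1)) = (p - 1).choose i := by
      rw [show i + 1 + (p - (i + 1)) - 1 = p - 1 by omega]
      exact Nat.choose_symm_of_eq_add (by omega)
    have e2 : (i + j + 2 - (i + 1) + p - 1).choose p = (p + j).choose j := by
      rw [show i + j + 2 - (i + 1) + p - 1 = p + j by omega]
      exact Nat.choose_symm_of_eq_add (by omega)
    rw [signCount, if_pos hp, e1, e2, div_mul_div_comm, ← pow_add]
    push_cast
    rfl
  · refine tendsto_const_nhds.congr' ?_
    filter_upwards [eventually_gt_atTop 0] with p hp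
    have hz : signCount (k + 2) p a = 0 := by
      unfold signCount
      split_ifs with hap
      · rcases Nat.eq_zero_or_pos a with rfl | h0
        · rw [Nat.choose_eq_zero_of_lt (by omega), zero_mul]
        · rw [Nat.choose_eq_zero_of_lt (n := k + 2 - a + p - 1) (by omega), mul_zero]
      · rfl
    rw [hz]
    simp

/-- Vandermonde's identity in the shape `∑ⱼ C(k + 2, j + 1) C(k, j) = C(2k + 2, k + 1)`. -/
lemma sum_choose_mul_choose (k : ℕ) :
    ∑ j ∈ range (k + 1), (k + 2).choose (j + 1) * k.choose j = (2 * k + 2).choose (k + 1) := by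
  rw [show 2 * k + 2 = (k + 2) + k by ring, Nat.add_choose_eq,
    Nat.sum_antidiagonal_eq_sum_range_succ_mk, sum_range_succ' _ (k + 1)]
  simp only [Nat.sub_zero, Nat.choose_succ_self, mul_zero, add_zero]
  refine sum_congr rfl fun j hj => ?_
  have := mem_range.1 hj
  rw [show k + 1 - (j + 1) = k - j by omega, Nat.choose_symm (by omega)]

lemma sum_signLimit (k : ℕ) :
    ∑ S : Finset (Fin (k + 2)), signLimit k #S = ((2 * k + 2).choose (k + 1) : ℝ) / k.factorial := by
  rw [← powerset_univ, sum_powerset_apply_card, card_univ, Fintype.card_fin, sum_range_succ,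
    sum_range_succ']
  have h0 : signLimit k 0 = 0 := if_neg (by omega)
  have h1 : signLimit k (k + 2) = 0 := if_neg (by omega)
  rw [h0, h1, smul_zero, smul_zero, add_zero, add_zero, ← sum_choose_mul_choose, Nat.cast_sum,
    sum_div]
  refine sum_congr rfl fun j hj => ?_
  have hj := mem_range.1 hj
  rw [signLimit, if_pos (by omega), Nat.cast_mul, Nat.cast_choose ℝ (show j ≤ k by omega),
    nsmul_eq_mul, show j + 1 - 1 = j by omega, show k + 1 - (j + 1) = k - j by omega]
  field_simp

lemma tendsto_half_div :
    Tendsto (fun D : ℕ => ((D / 2 + 1 : ℕ) : ℝ) / D) atTop (𝓝 (1 / 2)) := by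
  have hup : Tendsto (fun D : ℕ => 1 / 2 + (1 : ℝ) / D) atTop (𝓝 (1 / 2 + 0)) :=
    tendsto_const_nhds.add (tendsto_const_div_atTop_nhds_zero_nat _)
  rw [add_zero] at hup
  refine tendsto_of_tendsto_of_tendsto_of_le_of_le' tendsto_const_nhds hup ?_ ?_
  · filter_upwards [eventually_gt_atTop 0] with D hD
    have hD' : (0 : ℝ) < D := by positivity
    have h : (D : ℝ) ≤ 2 * (D / 2 + 1 : ℕ) := by
      exact_mod_cast (by omega : D ≤ 2 * (D / 2 + 1))
    rw [le_div_iff₀ hD']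
    linarith
  · filter_upwards [eventually_gt_atTop 0] with D hD
    have hD' : (0 : ℝ) < D := by positivity
    have h : (2 * (D / 2 + 1 : ℕ) : ℝ) ≤ D + 2 := by
      exact_mod_cast (by omega : 2 * (D / 2 + 1) ≤ D + 2)
    rw [div_le_iff₀ hD', add_mul, one_div_mul_cancel hD'.ne']
    linarith

lemma tendsto_ncard_zeroSumBall (k : ℕ) :
    Tendsto (fun D : ℕ => ((zeroSumBall (k + 2) D).ncard : ℝ) / (D : ℝ) ^ (k + 1)) atTop
      (𝓝 (((2 * k + 2).choose (k + 1) : ℝ) / k.factorial / (k + 1) * (1 / 2) ^ (k + 1))) := by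
  have hb : Tendsto (fun p : ℕ =>
      (∑ S : Finset (Fin (k + 2)), (signCount (k + 2) p #S : ℝ)) / (p : ℝ) ^ k) atTop
      (𝓝 (((2 * k + 2).choose (k + 1) : ℝ) / k.factorial)) := by
    rw [← sum_signLimit]
    simp only [sum_div]
    exact tendsto_finsetSum _ fun S _ => tendsto_signCount k #S (card_finset_fin_le S)
  have hhalf : Tendsto (fun D : ℕ => D / 2 + 1) atTop atTop :=
    tendsto_atTop_atTop.2 fun b => ⟨2 * b, fun a ha => by omega⟩
  have h := ((tendsto_sum_div_pow k _ _ hb).comp hhalf).mul (tendsto_half_div.pow (k + 1))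
  refine h.congr' ?_
  filter_upwards [eventually_gt_atTop 0] with D hD
  rw [ncard_zeroSumBall]
  simp only [Function.comp_apply, div_pow]
  push_cast
  field_simp

lemma tendsto_ncard_KsetT (k : ℕ) :
    Tendsto (fun D : ℕ => ((KsetT (k + 2) D).ncard : ℝ) / (D : ℝ) ^ (k + 1)) atTop
      (𝓝 (((2 * k + 2).choose (k + 1) : ℝ) / k.factorial / (k + 1) * (1 / 2) ^ (k + 1) /
        (k + 2).factorial)) := by
  set c := (k + 2) * (k + 2) with hc
  have hlow := (tendsto_ncard_zeroSumBall k).div_const ((k + 2).factorial : ℝ)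
  have hup : Tendsto (fun D : ℕ => ((zeroSumBall (k + 2) (D + c)).ncard : ℝ) / (D : ℝ) ^ (k + 1) /
      (k + 2).factorial) atTop (𝓝 (((2 * k + 2).choose (k + 1) : ℝ) / k.factorial / (k + 1) *
        (1 / 2) ^ (k + 1) / (k + 2).factorial)) := by
    refine Tendsto.div_const ?_ _
    have h := ((tendsto_ncard_zeroSumBall k).comp (tendsto_add_atTop_nat c)).mul
      ((tendsto_add_div c).pow (k + 1))
    rw [one_pow, mul_one] at h
    refine h.congr' ?_
    filter_upwards [eventually_gt_atTop 0] with D hD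
    have : (0 : ℝ) < (D + c : ℕ) := by positivity
    simp only [Function.comp_apply, div_pow]
    field_simp
  refine tendsto_of_tendsto_of_tendsto_of_le_of_le hlow hup ?_ ?_
  · intro D
    have h : ((zeroSumBall (k + 2) D).ncard : ℝ) ≤ (k + 2).factorial * (KsetT (k + 2) D).ncard := by
      exact_mod_cast ncard_zeroSumBall_le (k + 2) D
    simp only
    rw [div_right_comm]
    gcongr
    rw [div_le_iff₀ (by positivity)]
    linarith
  · intro D
    have h : ((k + 2).factorial * (KsetT (k + 2) D).ncard : ℝ) ≤
        (zeroSumBall (k + 2) (D + c)).ncard := by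
      exact_mod_cast le_ncard_zeroSumBall (k + 2) D
    simp only
    rw [div_right_comm]
    gcongr
    rw [le_div_iff₀ (by positivity)]
    linarith

/-- `#K_T(ν, D) ~ D^(ν−1) / (2(ν−1) 2^(ν−2) ((ν−1)!)²) · C(2ν−2, ν−2)` as `D → ∞`,
for fixed `ν ≥ 3`. -/
theorem KsetT_asymptotics (ν : ℕ) (hν : 3 ≤ ν) :
    Filter.Tendsto
      (fun D : ℕ =>
        ((KsetT ν D).ncard : ℝ) /
          ((D : ℝ) ^ (ν - 1) /
              (2 * ((ν : ℝ) - 1) * 2 ^ (ν - 2) * (Nat.factorial (ν - 1)) ^ 2)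
            * (Nat.choose (2 * ν - 2) (ν - 2))))
      Filter.atTop (nhds 1) := by
  obtain ⟨k, rfl⟩ : ∃ k, ν = k + 2 := ⟨ν - 2, by omega⟩
  rw [show k + 2 - 1 = k + 1 by omega, show k + 2 - 2 = k by omega,
    show 2 * (k + 2) - 2 = 2 * k + 2 by omega]
  -- `C(2k + 2, k + 1) (k + 1) = C(2k + 2, k) (k + 2)` reconciles the two binomials.
  have hch : ((2 * k + 2).choose (k + 1) : ℝ) * (k + 1) = (2 * k + 2).choose k * (k + 2) := by
    have h := Nat.choose_succ_right_eq (2 * k + 2) k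
    rw [show 2 * k + 2 - k = k + 2 by omega] at h
    exact_mod_cast h
  have hpos : (0 : ℝ) < (2 * k + 2).choose k := by
    exact_mod_cast Nat.choose_pos (by omega)
  have hch' : ((2 * k + 2).choose (k + 1) : ℝ) = (2 * k + 2).choose k * (k + 2) / (k + 1) := by
    rw [← hch]
    field_simp
  have hk : (0 : ℝ) < k.factorial := by positivity
  have h := (tendsto_ncard_KsetT k).mul_const
    ((2 * (((k + 2 : ℕ) : ℝ) - 1) * 2 ^ k * ((k + 1).factorial : ℝ) ^ 2) / (2 * k + 2).choose k)
  have hone : ((2 * k + 2).choose (k + 1) : ℝ) / k.factorial / (k + 1) * (1 / 2) ^ (k + 1) /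
      (k + 2).factorial * ((2 * (((k + 2 : ℕ) : ℝ) - 1) * 2 ^ k * ((k + 1).factorial : ℝ) ^ 2) /
        (2 * k + 2).choose k) = 1 := by
    rw [hch', Nat.factorial_succ (k + 1), Nat.factorial_succ k]
    push_cast
    rw [show (k : ℝ) + 2 - 1 = k + 1 by ring, show (k : ℝ) + 1 + 1 = k + 2 by ring, div_pow]
    field_simp
    ring
  rw [hone] at h
  refine h.congr fun D => ?_
  rw [div_mul_div_comm, div_mul_eq_mul_div, div_div_eq_mul_div]
end

section
/- For every fixed integer ν ≥ 3, the number of dependent tuples in K_T(ν, D) all of whose entries are nonzero is O(D^{ν−2}) as D → ∞, i.e., there exist constants C > 0 and D₀ such that this count is at most C · D^{ν−2} for all D ≥ D₀. -/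
/-- A tuple `m ∈ ℤ^ν` is *dependent* if some nonempty proper subset of its
entries sums to zero. -/
def IsDependentT {ν : ℕ} (m : Fin ν → ℤ) : Prop :=
  ∃ S : Finset (Fin ν), S.Nonempty ∧ S ≠ Finset.univ ∧ (∑ t ∈ S, m t) = 0

/-- Integer tuples with entries in `[-D, D]` whose total sum and whose sum over `S` both vanish. -/
def zeroSumTuples (ν D : ℕ) (S : Finset (Fin ν)) : Set (Fin ν → ℤ) :=
  {m | (∀ i, m i ∈ Finset.Icc (-(D : ℤ)) D) ∧ (∑ i, m i) = 0 ∧ (∑ i ∈ S, m i) = 0}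

lemma finite_zeroSumTuples (ν D : ℕ) (S : Finset (Fin ν)) : (zeroSumTuples ν D S).Finite :=
  (Fintype.piFinset fun _ : Fin ν => Finset.Icc (-(D : ℤ)) D).finite_toSet.subset
    fun _ hm => Finset.mem_coe.2 (Fintype.mem_piFinset.2 hm.1)

/-- Two functions with equal sums over `S` that agree on `S` away from `a ∈ S` agree at `a`. -/
lemma eq_at_of_sum_eq {ι : Type*} [DecidableEq ι] {S : Finset ι} {a : ι} (ha : a ∈ S)
    {f g : ι → ℤ} (hsum : ∑ i ∈ S, f i = ∑ i ∈ S, g i)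
    (h : ∀ i ∈ S, i ≠ a → f i = g i) : f a = g a := by
  have h' : ∑ i ∈ S.erase a, f i = ∑ i ∈ S.erase a, g i :=
    Finset.sum_congr rfl fun i hi =>
      h i (Finset.mem_of_mem_erase hi) (Finset.ne_of_mem_erase hi)
  rw [← Finset.add_sum_erase S f ha, ← Finset.add_sum_erase S g ha, h'] at hsum
  exact add_right_cancel hsum

lemma ncard_zeroSumTuples_le (ν D : ℕ) (S : Finset (Fin ν)) (hne : S.Nonempty)
    (hS : S ≠ Finset.univ) : (zeroSumTuples ν D S).ncard ≤ (2 * D + 1) ^ (ν - 2) := by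
  obtain ⟨a, ha⟩ := hne
  obtain ⟨b, hb⟩ : ∃ b, b ∉ S := by
    by_contra! h
    exact hS (Finset.eq_univ_iff_forall.2 h)
  have hab : a ≠ b := fun h => hb (h ▸ ha)
  let R : Finset (Fin ν) := {a, b}ᶜ
  have hR : R.card = ν - 2 := by
    rw [Finset.card_compl, Finset.card_pair hab, Fintype.card_fin]
  let T : Finset (R → ℤ) := Fintype.piFinset fun _ => Finset.Icc (-(D : ℤ)) D
  have hT : T.card = (2 * D + 1) ^ (ν - 2) := by
    have h : ((D : ℤ) + 1 + D).toNat = 2 * D + 1 := by omega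
    simp [T, hR, h]
  rw [← hT, ← Set.ncard_coe_finset]
  refine Set.ncard_le_ncard_of_injOn (fun m i => m i) (fun m hm => ?_) ?_ T.finite_toSet
  · exact Finset.mem_coe.2 (Fintype.mem_piFinset.2 fun i => hm.1 i)
  · intro m hm n hn hmn
    have key : ∀ i, i ≠ a → i ≠ b → m i = n i := fun i hia hib =>
      congrFun hmn ⟨i, by simp [R, hia, hib]⟩
    have hma : m a = n a := eq_at_of_sum_eq ha (hm.2.2.trans hn.2.2.symm)
      fun i hi hia => key i hia fun h => hb (h ▸ hi)
    have hmb : m b = n b := eq_at_of_sum_eq (Finset.mem_univ b) (hm.2.1.trans hn.2.1.symm)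
      fun i _ hib => by
        by_cases hia : i = a
        · rw [hia, hma]
        · exact key i hia hib
    funext i
    by_cases hia : i = a
    · rw [hia, hma]
    by_cases hib : i = b
    · rw [hib, hmb]
    exact key i hia hib

/-- The number of dependent tuples in `K_T(ν, D)` with all entries nonzero is
`O(D^(ν−2))` as `D → ∞`, for fixed `ν ≥ 3`. -/
theorem DsetT_nonzero_card_bigO (ν : ℕ) (hν : 3 ≤ ν) :
    ∃ C : ℝ, 0 < C ∧ ∃ D₀ : ℕ, ∀ D : ℕ, D₀ ≤ D →
      (({m | m ∈ KsetT ν D ∧ (∀ i, m i ≠ 0) ∧ IsDependentT m} : Set (Fin ν → ℤ)).ncard : ℝ)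
        ≤ C * (D : ℝ) ^ (ν - 2) := by
  classical
  -- `2 ^ ν` counts the subsets, and `2 * D + 1 ≤ 3 * D` for `D ≥ 1`.
  refine ⟨2 ^ ν * 3 ^ (ν - 2), by positivity, 1, fun D hD => ?_⟩
  let F : Finset (Finset (Fin ν)) := {S | S.Nonempty ∧ S ≠ Finset.univ}
  have hsub : {m | m ∈ KsetT ν D ∧ (∀ i, m i ≠ 0) ∧ IsDependentT m} ⊆
      ⋃ S ∈ F, zeroSumTuples ν D S := by
    rintro m ⟨⟨-, hsum, habs⟩, -, S, hne, hS, hS0⟩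
    refine Set.mem_biUnion (show S ∈ F by simp [F, hne, hS]) ⟨fun i => ?_, hsum, hS0⟩
    have hi : |m i| ≤ ∑ j, |m j| :=
      Finset.single_le_sum (f := fun j => |m j|) (fun j _ => abs_nonneg _) (Finset.mem_univ i)
    exact Finset.mem_Icc.2 (abs_le.1 (hi.trans habs))
  have hF : F.card ≤ 2 ^ ν := by
    simpa using Finset.card_le_univ F
  have hcard : ({m | m ∈ KsetT ν D ∧ (∀ i, m i ≠ 0) ∧ IsDependentT m} :
      Set (Fin ν → ℤ)).ncard ≤ 2 ^ ν * 3 ^ (ν - 2) * D ^ (ν - 2) := calc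
    _ ≤ (⋃ S ∈ F, zeroSumTuples ν D S).ncard :=
      Set.ncard_le_ncard hsub (F.finite_toSet.biUnion fun S _ => finite_zeroSumTuples ν D S)
    _ ≤ ∑ S ∈ F, (zeroSumTuples ν D S).ncard := Finset.set_ncard_biUnion_le _ _
    _ ≤ F.card * (2 * D + 1) ^ (ν - 2) := by
      refine Finset.sum_le_card_nsmul _ _ _ fun S hS => ?_
      obtain ⟨hne, hS⟩ : S.Nonempty ∧ S ≠ Finset.univ := by simpa [F] using hS
      exact ncard_zeroSumTuples_le ν D S hne hS
    _ ≤ 2 ^ ν * (3 * D) ^ (ν - 2) := by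
      gcongr
      omega
    _ = 2 ^ ν * 3 ^ (ν - 2) * D ^ (ν - 2) := by rw [mul_pow, mul_assoc]
  exact_mod_cast hcard
end

section
/- For every fixed integer ν ≥ 3, the ratio #D_T(ν, D) / #K_T(ν, D) is Θ(1/D) as D → ∞, i.e., there exist constants 0 < c ≤ C and D₀ such that c/D ≤ #D_T(ν, D)/#K_T(ν, D) ≤ C/D for all D ≥ D₀. -/
/-- `D_T(ν, D)`: the dependent elements of `K_T(ν, D)`. -/
def DsetT (ν D : ℕ) : Set (Fin ν → ℤ) :=
  {m | m ∈ KsetT ν D ∧ IsDependentT m}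

lemma KsetT_abs_le {ν D : ℕ} {m : Fin ν → ℤ} (hm : m ∈ KsetT ν D) (t : Fin ν) : |m t| ≤ D :=
  (Finset.single_le_sum (f := fun i => |m i|) (fun _ _ => abs_nonneg _)
    (Finset.mem_univ t)).trans hm.2.2

lemma KsetT_finite (ν D : ℕ) : (KsetT ν D).Finite := by
  refine (Set.finite_Icc (fun _ : Fin ν => -(D : ℤ)) (fun _ => (D : ℤ))).subset ?_
  intro m hm
  exact ⟨fun t => (abs_le.1 (KsetT_abs_le hm t)).1, fun t => (abs_le.1 (KsetT_abs_le hm t)).2⟩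

lemma ncard_le_of_determined {ν D : ℕ} (s : Set (Fin ν → ℤ)) (hs : s ⊆ KsetT ν D)
    (T : Finset (Fin ν))
    (h : ∀ m ∈ s, ∀ m' ∈ s, (∀ t ∈ T, m t = m' t) → m = m') :
    s.ncard ≤ (2 * D + 1) ^ T.card := by
  classical
  let B : Finset (T → ℤ) := Fintype.piFinset fun _ => Finset.Icc (-(D : ℤ)) D
  have hB : B.card = (2 * D + 1) ^ T.card := by
    simp only [B, Fintype.card_piFinset, Int.card_Icc, Finset.prod_const, Finset.card_univ,
      Fintype.card_coe]
    congr 1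
    omega
  rw [← hB, ← Set.ncard_coe_finset]
  refine Set.ncard_le_ncard_of_injOn (fun m (t : T) => m t) ?_ ?_ (Finset.finite_toSet _)
  · intro m hm
    simp only [B, Finset.mem_coe, Fintype.mem_piFinset, Finset.mem_Icc]
    exact fun t => abs_le.1 (KsetT_abs_le (hs hm) t)
  · intro m hm m' hm' hmm
    exact h m hm m' hm' fun t ht => congrFun hmm ⟨t, ht⟩

lemma eq_of_sum_eq_zero {ι : Type*} [DecidableEq ι] {S : Finset ι} {i : ι} (hi : i ∈ S)
    {m m' : ι → ℤ} (hm : ∑ t ∈ S, m t = 0) (hm' : ∑ t ∈ S, m' t = 0)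
    (h : ∀ t ∈ S.erase i, m t = m' t) : m i = m' i := by
  have h1 := Finset.add_sum_erase S m hi
  have h2 := Finset.add_sum_erase S m' hi
  have h3 := Finset.sum_congr rfl h
  linarith

lemma KsetT_ncard_le (k D : ℕ) : (KsetT (k + 2) D).ncard ≤ (2 * D + 1) ^ (k + 1) := by
  have := ncard_le_of_determined (KsetT (k + 2) D) subset_rfl (Finset.univ.erase 0) ?_
  · simpa using this
  · intro m hm m' hm' h
    funext t
    by_cases ht : t = 0
    · rw [ht]
      exact eq_of_sum_eq_zero (Finset.mem_univ 0) hm.2.1 hm'.2.1 h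
    · exact h t (by simp [ht])

lemma DsetT_ncard_le (k D : ℕ) :
    (DsetT (k + 2) D).ncard ≤ 2 ^ (k + 2) * (2 * D + 1) ^ k := by
  classical
  let P : Finset (Finset (Fin (k + 2))) :=
    Finset.univ.filter fun S => S.Nonempty ∧ S ≠ Finset.univ
  let F : Finset (Fin (k + 2)) → Set (Fin (k + 2) → ℤ) :=
    fun S => {m | m ∈ KsetT (k + 2) D ∧ ∑ t ∈ S, m t = 0}
  have hsub : DsetT (k + 2) D ⊆ ⋃ S ∈ P, F S := by
    rintro m ⟨hm, S, h1, h2, h3⟩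
    simp only [Set.mem_iUnion]
    exact ⟨S, by simp [P, h1, h2], hm, h3⟩
  have hfin : (⋃ S ∈ P, F S).Finite :=
    (KsetT_finite (k + 2) D).subset (Set.iUnion₂_subset fun S _ m hm => hm.1)
  have hF : ∀ S ∈ P, (F S).ncard ≤ (2 * D + 1) ^ k := by
    intro S hS
    obtain ⟨⟨i, hi⟩, hne⟩ := (Finset.mem_filter.1 hS).2
    obtain ⟨j, hj⟩ : ∃ j, j ∉ S := by
      by_contra! hall
      exact hne (Finset.eq_univ_iff_forall.2 hall)
    have hij : j ≠ i := fun h => hj (h ▸ hi)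
    have := ncard_le_of_determined (F S) (fun m hm => hm.1) ((Finset.univ.erase i).erase j) ?_
    · rwa [Finset.card_erase_of_mem (by simp [hij]), Finset.card_erase_of_mem (by simp),
        Finset.card_univ, Fintype.card_fin] at this
    · intro m hm m' hm' h
      have hc : ∀ m ∈ F S, ∑ t ∈ Sᶜ, m t = 0 := by
        intro m hm
        have h1 := Finset.sum_add_sum_compl S m
        have h2 := hm.1.2.1
        have h3 := hm.2
        omega
      funext t
      by_cases hti : t = i
      · subst hti
        refine eq_of_sum_eq_zero hi hm.2 hm'.2 fun s hs => h s ?_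
        grind
      · by_cases htj : t = j
        · subst htj
          refine eq_of_sum_eq_zero (Finset.mem_compl.2 hj) (hc m hm) (hc m' hm') fun s hs => h s ?_
          rw [Finset.mem_erase, Finset.mem_compl] at hs
          simp only [Finset.mem_erase, Finset.mem_univ, and_true]
          exact ⟨hs.1, fun hsi => hs.2 (hsi ▸ hi)⟩
        · exact h t (by simp [hti, htj])
  calc (DsetT (k + 2) D).ncard ≤ (⋃ S ∈ P, F S).ncard := Set.ncard_le_ncard hsub hfin
    _ ≤ ∑ S ∈ P, (F S).ncard := Finset.set_ncard_biUnion_le P F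
    _ ≤ P.card • (2 * D + 1) ^ k := Finset.sum_le_card_nsmul _ _ _ hF
    _ ≤ 2 ^ (k + 2) * (2 * D + 1) ^ k := by
      rw [smul_eq_mul]
      gcongr
      exact (Finset.card_filter_le _ _).trans (by simp)

/-- The nonnegative part of the tuples used for the lower bounds: entry `i` is the element at
offset `a i` of the block `[(n - 1 - i) * M, (n - i) * M)`. -/
def blockEntry {n M : ℕ} (a : Fin n → Fin M) (i : Fin n) : ℤ :=
  ((n - 1 - (i : ℕ) : ℕ) : ℤ) * M + (a i : ℕ)

/-- The entries `blockEntry a`, followed by minus their sum. -/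
def blockTuple {n M : ℕ} (a : Fin n → Fin M) : Fin (n + 1) → ℤ :=
  Fin.snoc (blockEntry a) (-∑ i, blockEntry a i)

lemma blockTuple_injective {n M : ℕ} :
    Function.Injective (blockTuple : (Fin n → Fin M) → Fin (n + 1) → ℤ) := by
  intro a b h
  funext i
  have := congrFun h i.castSucc
  simp only [blockTuple, Fin.snoc_castSucc, blockEntry] at this
  exact Fin.ext (by omega)

lemma blockEntry_nonneg {n M : ℕ} (a : Fin n → Fin M) (i : Fin n) : 0 ≤ blockEntry a i := by
  unfold blockEntry
  positivity

lemma blockEntry_le {n M : ℕ} (a : Fin n → Fin M) (i : Fin n) :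
    blockEntry a i ≤ (n : ℤ) * M := by
  unfold blockEntry
  have h1 : ((n - 1 - (i : ℕ) : ℕ) : ℤ) + 1 ≤ n := by omega
  have h2 : ((a i : ℕ) : ℤ) ≤ M := by exact_mod_cast (a i).2.le
  nlinarith [mul_le_mul_of_nonneg_right h1 (Int.natCast_nonneg M)]

lemma blockEntry_antitone {n M : ℕ} (a : Fin n → Fin M) {i j : Fin n} (h : i ≤ j) :
    blockEntry a j ≤ blockEntry a i := by
  rcases h.eq_or_lt with rfl | h
  · rfl
  · unfold blockEntry
    have h1 : ((n - 1 - (j : ℕ) : ℕ) : ℤ) + 1 ≤ ((n - 1 - (i : ℕ) : ℕ) : ℤ) := by omega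
    have h2 : ((a j : ℕ) : ℤ) ≤ M := by exact_mod_cast (a j).2.le
    nlinarith [mul_le_mul_of_nonneg_right h1 (Int.natCast_nonneg M)]

lemma blockTuple_mem {n M D : ℕ} (hD : 2 * n ^ 2 * M ≤ D) (a : Fin n → Fin M) :
    blockTuple a ∈ KsetT (n + 1) D := by
  have hpos : 0 ≤ ∑ i, blockEntry a i := Finset.sum_nonneg fun i _ => blockEntry_nonneg a i
  refine ⟨?_, ?_, ?_⟩
  · intro i j
    refine Fin.lastCases ?_ (fun j => ?_) j <;> refine Fin.lastCases ?_ (fun i => ?_) i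
    · simp
    · intro _
      simp only [blockTuple, Fin.snoc_castSucc, Fin.snoc_last]
      linarith [blockEntry_nonneg a i]
    · intro h
      exact absurd h (not_le.2 (Fin.castSucc_lt_last j))
    · intro h
      simp only [blockTuple, Fin.snoc_castSucc]
      exact blockEntry_antitone a (by simpa using h)
  · simp [blockTuple, Fin.sum_univ_castSucc]
  · have hle : ∑ i, blockEntry a i ≤ n * (n * M) := by
      simpa using Finset.sum_le_card_nsmul Finset.univ (blockEntry a) _
        fun i _ => blockEntry_le a i
    have hD' : 2 * (n : ℤ) ^ 2 * M ≤ D := by exact_mod_cast hD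
    simp only [blockTuple, Fin.sum_univ_castSucc, Fin.snoc_castSucc, Fin.snoc_last, abs_neg,
      abs_of_nonneg (blockEntry_nonneg a _), abs_of_nonneg hpos]
    nlinarith

lemma le_KsetT_ncard {k M D : ℕ} (hD : 2 * (k + 1) ^ 2 * M ≤ D) :
    M ^ (k + 1) ≤ (KsetT (k + 2) D).ncard := by
  have h := Set.ncard_le_ncard (s := Set.range (blockTuple : (Fin (k + 1) → Fin M) → _))
    (Set.range_subset_iff.2 (blockTuple_mem hD)) (KsetT_finite (k + 2) D)
  rw [← Set.image_univ, Set.ncard_image_of_injective _ blockTuple_injective] at h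
  simpa using h

lemma le_DsetT_ncard {k M D : ℕ} (hM : 0 < M) (hD : 2 * (k + 1) ^ 2 * M ≤ D) :
    M ^ k ≤ (DsetT (k + 2) D).ncard := by
  let f : (Fin k → Fin M) → Fin (k + 2) → ℤ :=
    fun a => blockTuple (Fin.snoc a ⟨0, hM⟩ : Fin (k + 1) → Fin M)
  have hf : Function.Injective f := by
    intro a b h
    exact (Fin.snoc_inj.1 (blockTuple_injective h)).1
  have h := Set.ncard_le_ncard (s := Set.range f) (t := DsetT (k + 2) D) ?_
    ((KsetT_finite (k + 2) D).subset fun m hm => hm.1)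
  · rw [← Set.image_univ, Set.ncard_image_of_injective _ hf] at h
    simpa using h
  · rintro _ ⟨a, rfl⟩
    -- The entry in the lowest block `[0, M)` has offset `0`, hence vanishes.
    refine ⟨blockTuple_mem hD _, {(Fin.last k).castSucc}, by simp, fun h => ?_, ?_⟩
    · have := congrArg Finset.card h
      simp at this
    · simp [f, blockTuple, blockEntry]

/-- For fixed `ν ≥ 3`, the ratio `#D_T(ν, D) / #K_T(ν, D)` is `Θ(1/D)` as `D → ∞`. -/
theorem DsetT_ratio_theta (ν : ℕ) (hν : 3 ≤ ν) :
    ∃ c C : ℝ, 0 < c ∧ c ≤ C ∧ ∃ D₀ : ℕ, ∀ D : ℕ, D₀ ≤ D →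
      c / (D : ℝ) ≤ ((DsetT ν D).ncard : ℝ) / ((KsetT ν D).ncard : ℝ) ∧
      ((DsetT ν D).ncard : ℝ) / ((KsetT ν D).ncard : ℝ) ≤ C / (D : ℝ) := by
  obtain ⟨k, rfl⟩ : ∃ k, ν = k + 2 := ⟨ν - 2, by omega⟩
  obtain ⟨q, hq⟩ : ∃ q : ℕ, q = 2 * (k + 1) ^ 2 := ⟨_, rfl⟩
  have hq0 : 0 < q := by rw [hq]; positivity
  -- For `D ≥ q` the block length `M = D / q` satisfies `D / (2 * q) ≤ M`, and `2 * D + 1 ≤ 3 * D`.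
  obtain ⟨r, hr⟩ : ∃ r : ℝ, r = 1 / (2 * q) := ⟨_, rfl⟩
  have hr0 : 0 < r := by rw [hr]; positivity
  refine ⟨r ^ k / 3 ^ (k + 1), max (r ^ k / 3 ^ (k + 1)) (2 ^ (k + 2) * 3 ^ k / r ^ (k + 1)),
    by positivity, le_max_left _ _, q, fun D hD => ?_⟩
  have hD0 : 0 < D := hq0.trans_le hD
  have hDR : (0 : ℝ) < D := by exact_mod_cast hD0
  have hMpos : 0 < D / q := Nat.div_pos hD hq0
  have hMD : 2 * (k + 1) ^ 2 * (D / q) ≤ D := by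
    rw [← hq]
    exact Nat.mul_div_le D q
  have hrM : r * D ≤ ((D / q : ℕ) : ℝ) := by
    have h1 : D ≤ 2 * q * (D / q) := by
      have h2 := Nat.div_add_mod D q
      have h3 := Nat.mod_lt D hq0
      nlinarith
    have h2 : (D : ℝ) ≤ 2 * q * ((D / q : ℕ) : ℝ) := by exact_mod_cast h1
    have hqR : (0 : ℝ) < q := by exact_mod_cast hq0
    rw [hr, div_mul_eq_mul_div, one_mul, div_le_iff₀ (by positivity)]
    linarith
  have h3D : (2 * (D : ℝ) + 1) ≤ 3 * D := by
    have : (1 : ℝ) ≤ D := by exact_mod_cast hD0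
    linarith
  have hKu : ((KsetT (k + 2) D).ncard : ℝ) ≤ (3 * D) ^ (k + 1) := by
    refine le_trans ?_ (pow_le_pow_left₀ (by positivity) h3D _)
    exact_mod_cast KsetT_ncard_le k D
  have hDu : ((DsetT (k + 2) D).ncard : ℝ) ≤ 2 ^ (k + 2) * (3 * D) ^ k := by
    refine le_trans ?_ (mul_le_mul_of_nonneg_left (pow_le_pow_left₀ (by positivity) h3D _)
      (by positivity))
    exact_mod_cast DsetT_ncard_le k D
  have hKl : (r * D) ^ (k + 1) ≤ ((KsetT (k + 2) D).ncard : ℝ) := by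
    refine (pow_le_pow_left₀ (by positivity) hrM _).trans ?_
    exact_mod_cast le_KsetT_ncard hMD
  have hDl : (r * D) ^ k ≤ ((DsetT (k + 2) D).ncard : ℝ) := by
    refine (pow_le_pow_left₀ (by positivity) hrM _).trans ?_
    exact_mod_cast le_DsetT_ncard hMpos hMD
  have hK0 : (0 : ℝ) < (KsetT (k + 2) D).ncard := lt_of_lt_of_le (by positivity) hKl
  constructor
  · calc r ^ k / 3 ^ (k + 1) / (D : ℝ) = (r * D) ^ k / (3 * D) ^ (k + 1) := by
          rw [mul_pow, mul_pow]
          field_simp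
          ring
      _ ≤ _ := div_le_div₀ (by positivity) hDl hK0 hKu
  · calc ((DsetT (k + 2) D).ncard : ℝ) / ((KsetT (k + 2) D).ncard : ℝ)
        ≤ 2 ^ (k + 2) * (3 * D) ^ k / (r * D) ^ (k + 1) :=
          div_le_div₀ (by positivity) hDu (by positivity) hKl
      _ = 2 ^ (k + 2) * 3 ^ k / r ^ (k + 1) / (D : ℝ) := by
          rw [mul_pow, mul_pow]
          field_simp
          ring
      _ ≤ _ := by
          gcongr
          exact le_max_right _ _
end

section
/- For every fixed integer ν ≥ 3, the ratio #D_{O(3)}(ν, D) / #K_{O(3)}(ν, D) is Θ(1/D) as D → ∞, i.e., there exist constants 0 < c ≤ C and D₀ such that c/D ≤ #D_{O(3)}(ν, D)/#K_{O(3)}(ν, D) ≤ C/D for all D ≥ D₀. -/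
/-!
A multiset of `ν` triples with vanishing `m`-sum has `3 ν - 1` free parameters of size `O(D)`, and
the parity condition only costs a constant factor, so `#K(ν, D)` is of order `D ^ (3 ν - 1)`.
A dependent multiset is a sum of elements of `K(a, D)` and `K(ν - a, D)` with `0 < a < ν`, and
there are `O(D ^ (3 a - 1) * D ^ (3 (ν - a) - 1)) = O(D ^ (3 ν - 2))` such pairs
(`KO3_ncard_le`, `DO3_ncard_le`).

For the matching lower bounds, explicit families at scale `B`, a fixed fraction of `D`, are used.
The `n`-entries of the triples are confined to pairwise disjoint intervals of length `B`, so the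
multiset remembers which triple is which and no symmetry factors arise. All triples but one are
free; the last one takes `m = -∑ mᵢ` and `l = ∑ lᵢ + 2 j`, which makes the `l`-sum even and keeps
`|m| ≤ l` (`family`, `le_KO3_ncard`). Adjoining a triple `(n, 2 j, 0)` to such a multiset of
`ν - 1` triples produces order `D ^ (3 ν - 2)` dependent multisets (`depFamily`, `le_DO3_ncard`).
-/

/-- `K_{O(3)}(ν, D)`: multisets of `ν` triples `(n, l, m) ∈ ℕ × ℕ × ℤ` with
`|m| ≤ l` in every triple, `m`-entries summing to `0`, `l`-entries having even
sum, and total degree `∑ (n + l) ≤ D`. -/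
def KO3 (ν D : ℕ) : Set (Multiset (ℕ × ℕ × ℤ)) :=
  {s | Multiset.card s = ν ∧ (∀ x ∈ s, |x.2.2| ≤ (x.2.1 : ℤ)) ∧
    (s.map (fun x => x.2.2)).sum = 0 ∧ Even (s.map (fun x => x.2.1)).sum ∧
    (s.map (fun x => x.1 + x.2.1)).sum ≤ D}

/-- A multiset of triples is *dependent* if it splits as a union of two nonempty
multisets, each of which separately satisfies the invariance constraints
(`m`-entries sum to `0` and `l`-entries have even sum). -/
def IsDependentO3 (s : Multiset (ℕ × ℕ × ℤ)) : Prop :=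
  ∃ s₁ s₂ : Multiset (ℕ × ℕ × ℤ), s₁ ≠ 0 ∧ s₂ ≠ 0 ∧ s = s₁ + s₂ ∧
    (s₁.map (fun x => x.2.2)).sum = 0 ∧ Even (s₁.map (fun x => x.2.1)).sum ∧
    (s₂.map (fun x => x.2.2)).sum = 0 ∧ Even (s₂.map (fun x => x.2.1)).sum

/-- `D_{O(3)}(ν, D)`: the dependent elements of `K_{O(3)}(ν, D)`. -/
def DO3 (ν D : ℕ) : Set (Multiset (ℕ × ℕ × ℤ)) :=
  {s | s ∈ KO3 ν D ∧ IsDependentO3 s}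

theorem KO3_mono {ν D D' : ℕ} (h : D ≤ D') : KO3 ν D ⊆ KO3 ν D' :=
  fun _ hs => ⟨hs.1, hs.2.1, hs.2.2.1, hs.2.2.2.1, hs.2.2.2.2.trans h⟩

/-! ### Upper bounds -/

/-- Finite set of triples that contains every triple of an element of `KO3 ν D`. -/
noncomputable def tripleBox (D : ℕ) : Finset (ℕ × ℕ × ℤ) :=
  Finset.range (D + 1) ×ˢ Finset.range (D + 1) ×ˢ Finset.Icc (-(D : ℤ)) D

theorem card_tripleBox (D : ℕ) : (tripleBox D).card = (D + 1) * ((D + 1) * (2 * D + 1)) := by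
  simp only [tripleBox, Finset.card_product, Finset.card_range, Int.card_Icc]
  congr 2
  omega

/-- Reconstruction of a multiset of `k + 1` triples with vanishing `m`-sum from `k` of its
triples and the `(n, l)`-part of the remaining one. -/
def rebuild (k : ℕ) (q : (Fin k → ℕ × ℕ × ℤ) × (ℕ × ℕ)) : Multiset (ℕ × ℕ × ℤ) :=
  (q.2.1, q.2.2, -∑ i, (q.1 i).2.2) ::ₘ Multiset.map q.1 Finset.univ.val

theorem KO3_mem_box {ν D : ℕ} {s : Multiset (ℕ × ℕ × ℤ)} (hs : s ∈ KO3 ν D)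
    {x : ℕ × ℕ × ℤ} (hx : x ∈ s) : x ∈ tripleBox D := by
  obtain ⟨-, h2, -, -, h5⟩ := hs
  have h6 : x.1 + x.2.1 ≤ D :=
    (Multiset.single_le_sum (fun _ _ => Nat.zero_le _) _
      (Multiset.mem_map_of_mem (fun x : ℕ × ℕ × ℤ => x.1 + x.2.1) hx)).trans h5
  have h7 := abs_le.1 (h2 x hx)
  simp only [tripleBox, Finset.mem_product, Finset.mem_range, Finset.mem_Icc]
  omega

theorem KO3_subset_image (k D : ℕ) :
    KO3 (k + 1) D ⊆ ↑((Fintype.piFinset (fun _ : Fin k => tripleBox D) ×ˢ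
      (Finset.range (D + 1) ×ˢ Finset.range (D + 1))).image (rebuild k)) := by
  intro s hs
  obtain ⟨x, t, rfl⟩ : ∃ x t, s = x ::ₘ t := by
    obtain ⟨x, hx⟩ := Multiset.card_pos_iff_exists_mem.1 (by rw [hs.1]; omega : 0 < s.card)
    obtain ⟨t, ht⟩ := Multiset.exists_cons_of_mem hx
    exact ⟨x, t, ht⟩
  have hcard : t.card = k := by simpa using hs.1
  obtain ⟨f, rfl⟩ : ∃ f : Fin k → ℕ × ℕ × ℤ, t = Multiset.map f Finset.univ.val := by
    induction t using Quotient.inductionOn with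
    | _ L =>
      have hL : L.length = k := by simpa using hcard
      subst hL
      refine ⟨L.get, ?_⟩
      simp [Fin.univ_val_map]
  have hx : x ∈ tripleBox D := KO3_mem_box hs (by simp)
  have hf : ∀ i, f i ∈ tripleBox D := fun i => KO3_mem_box hs (by simp)
  have hsum : x.2.2 + ∑ i, (f i).2.2 = 0 := by
    have := hs.2.2.1
    simpa [Finset.sum, Function.comp_def] using this
  simp only [Finset.coe_image, Set.mem_image, Finset.mem_coe]
  refine ⟨(f, (x.1, x.2.1)), ?_, ?_⟩
  · simp only [tripleBox, Finset.mem_product] at hx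
    simp only [Finset.mem_product, Fintype.mem_piFinset]
    exact ⟨hf, hx.1, hx.2.1⟩
  · simp only [rebuild]
    congr 1
    ext <;> simp
    omega

theorem KO3_finite (k D : ℕ) : (KO3 (k + 1) D).Finite :=
  (Finset.finite_toSet _).subset (KO3_subset_image k D)

theorem KO3_ncard_le (k D : ℕ) (hD : 1 ≤ D) :
    (KO3 (k + 1) D).ncard ≤ 12 ^ (k + 1) * D ^ (3 * k + 2) := by
  have h1 := Set.ncard_le_ncard (KO3_subset_image k D) (Finset.finite_toSet _)
  rw [Set.ncard_coe_finset] at h1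
  refine h1.trans (Finset.card_image_le.trans ?_)
  rw [Finset.card_product, Fintype.card_piFinset, Finset.card_product, Finset.card_range]
  simp only [card_tripleBox, Finset.prod_const, Finset.card_univ, Fintype.card_fin]
  have e1 : (D + 1) * ((D + 1) * (2 * D + 1)) ≤ 12 * D ^ 3 :=
    calc (D + 1) * ((D + 1) * (2 * D + 1)) ≤ (2 * D) * ((2 * D) * (3 * D)) := by
          gcongr <;> omega
      _ = 12 * D ^ 3 := by ring
  have e2 : (D + 1) * (D + 1) ≤ 12 * D ^ 2 :=
    calc (D + 1) * (D + 1) ≤ (2 * D) * (2 * D) := by gcongr <;> omega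
      _ ≤ 12 * D ^ 2 := by nlinarith
  calc _ ≤ (12 * D ^ 3) ^ k * (12 * D ^ 2) := by gcongr
    _ = 12 ^ (k + 1) * D ^ (3 * k + 2) := by ring

theorem DO3_subset (n D : ℕ) :
    DO3 (n + 2) D ⊆ ⋃ a ∈ Finset.range (n + 1),
      (fun p : Multiset (ℕ × ℕ × ℤ) × Multiset (ℕ × ℕ × ℤ) => p.1 + p.2) ''
        (KO3 (a + 1) D ×ˢ KO3 (n - a + 1) D) := by
  rintro s ⟨hs, s₁, s₂, h1, h2, rfl, hm1, hl1, hm2, hl2⟩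
  obtain ⟨hc, habs, -, -, hdeg⟩ := hs
  have c1 := Multiset.card_pos.2 h1
  have c2 := Multiset.card_pos.2 h2
  simp only [Multiset.card_add, Multiset.map_add, Multiset.sum_add] at hc hdeg
  simp only [Set.mem_iUnion, Finset.mem_range]
  refine ⟨s₁.card - 1, by omega, (s₁, s₂), ⟨⟨by simp only; omega, ?_, hm1, hl1, by simp only; omega⟩,
    ⟨by simp only; omega, ?_, hm2, hl2, by simp only; omega⟩⟩, rfl⟩
  · exact fun x hx => habs x (Multiset.mem_add.2 (Or.inl hx))
  · exact fun x hx => habs x (Multiset.mem_add.2 (Or.inr hx))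

theorem DO3_ncard_le (n D : ℕ) (hD : 1 ≤ D) :
    (DO3 (n + 2) D).ncard ≤ (n + 1) * (12 ^ (n + 2) * D ^ (3 * n + 4)) := by
  have hfin : ∀ a, ((fun p : Multiset (ℕ × ℕ × ℤ) × Multiset (ℕ × ℕ × ℤ) => p.1 + p.2) ''
        (KO3 (a + 1) D ×ˢ KO3 (n - a + 1) D)).Finite := fun a =>
    ((KO3_finite a D).prod (KO3_finite (n - a) D)).image _
  refine (Set.ncard_le_ncard (DO3_subset n D)
    (Set.Finite.biUnion (Finset.finite_toSet _) fun a _ => hfin a)).trans ?_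
  refine (Finset.set_ncard_biUnion_le _ _).trans ?_
  refine (Finset.sum_le_card_nsmul _ _ (12 ^ (n + 2) * D ^ (3 * n + 4)) fun a ha => ?_).trans
    (by simp)
  have ha' : a ≤ n := by have := Finset.mem_range.1 ha; omega
  refine (Set.ncard_image_le ((KO3_finite a D).prod (KO3_finite (n - a) D))).trans ?_
  rw [Set.ncard_prod]
  calc _ ≤ (12 ^ (a + 1) * D ^ (3 * a + 2)) * (12 ^ (n - a + 1) * D ^ (3 * (n - a) + 2)) :=
        Nat.mul_le_mul (KO3_ncard_le a D hD) (KO3_ncard_le (n - a) D hD)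
    _ = 12 ^ ((a + 1) + (n - a + 1)) * D ^ ((3 * a + 2) + (3 * (n - a) + 2)) := by
        rw [pow_add, pow_add]; ring
    _ = _ := by congr 2 <;> omega

/-! ### Lower bounds -/

/-- The `i`-th free triple of `family`: its `n`-entry lies in `[(i + 1) B, (i + 2) B)`, its
`l`-entry in `[B, 2 B)` and its `m`-entry in `[0, B)`. -/
def freeTriple (k B : ℕ) (f : Fin k → Fin B × Fin B × Fin B) (i : Fin k) : ℕ × ℕ × ℤ :=
  (B * (i + 1) + (f i).1, B + (f i).2.1, ((f i).2.2 : ℕ))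

/-- The triple of `family` forced by the invariance constraints: its `n`-entry lies in `[0, B)`,
its `m`-entry cancels those of the free triples, and its `l`-entry exceeds the sum of theirs by
an even number, which settles both the parity constraint and `|m| ≤ l`. -/
def lastTriple (k B : ℕ) (q : (Fin k → Fin B × Fin B × Fin B) × (Fin B × Fin B)) : ℕ × ℕ × ℤ :=
  (q.2.1, (∑ i, (freeTriple k B q.1 i).2.1) + 2 * q.2.2, -∑ i, (freeTriple k B q.1 i).2.2)

/-- A family of elements of `KO3 (k + 1) D` with `D = O(B)`, indexed by `B ^ (3 k + 2)`
parameters; the `n`-entries of the triples lie in pairwise disjoint intervals. -/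
def family (k B : ℕ) (q : (Fin k → Fin B × Fin B × Fin B) × (Fin B × Fin B)) :
    Multiset (ℕ × ℕ × ℤ) :=
  lastTriple k B q ::ₘ Multiset.map (freeTriple k B q.1) Finset.univ.val

theorem family_mem (k B : ℕ) (q) : family k B q ∈ KO3 (k + 1) ((k ^ 2 + 5 * k + 3) * B) := by
  have hfree : ∀ i, 0 ≤ (freeTriple k B q.1 i).2.2 ∧
      (freeTriple k B q.1 i).2.2 ≤ ((freeTriple k B q.1 i).2.1 : ℤ) := fun i => by
    simp only [freeTriple]
    have := (q.1 i).2.2.2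
    omega
  have hl : ∑ i, (freeTriple k B q.1 i).2.1 ≤ k * (2 * B) := by
    refine (Finset.sum_le_card_nsmul _ _ (2 * B) fun i _ => ?_).trans (by simp)
    simp only [freeTriple]
    have := (q.1 i).2.1.2
    omega
  have hn : ∑ i, (freeTriple k B q.1 i).1 ≤ k * (B * (k + 1)) := by
    refine (Finset.sum_le_card_nsmul _ _ (B * (k + 1)) fun i _ => ?_).trans (by simp)
    simp only [freeTriple]
    have h1 := (q.1 i).1.2
    have h2 : B * ((i : ℕ) + 1 + 1) ≤ B * (k + 1) := Nat.mul_le_mul le_rfl (by omega)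
    rw [mul_add B (↑i + 1) 1] at h2
    omega
  have hsum : ∀ {M : Type} [AddCommMonoid M] (g : ℕ × ℕ × ℤ → M),
      ((family k B q).map g).sum = g (lastTriple k B q) + ∑ i, g (freeTriple k B q.1 i) := by
    intro M _ g
    simp [family, Finset.sum, Function.comp_def]
  refine ⟨by simp [family], ?_, ?_, ?_, ?_⟩
  · intro x hx
    simp only [family, Multiset.mem_cons, Multiset.mem_map] at hx
    rcases hx with rfl | ⟨i, -, rfl⟩
    · simp only [lastTriple, abs_neg]
      rw [abs_of_nonneg (Finset.sum_nonneg fun i _ => (hfree i).1)]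
      have := Finset.sum_le_sum fun i (_ : i ∈ Finset.univ) => (hfree i).2
      push_cast
      omega
    · rw [abs_of_nonneg (hfree i).1]
      exact (hfree i).2
  · rw [hsum]; simp [lastTriple]
  · rw [hsum]
    exact ⟨∑ i, (freeTriple k B q.1 i).2.1 + q.2.2, by simp only [lastTriple]; ring⟩
  · rw [hsum, Finset.sum_add_distrib]
    simp only [lastTriple]
    have h1 := q.2.1.2
    have h2 := q.2.2.2
    nlinarith

theorem family_fst_lt {k B : ℕ} {q} {x : ℕ × ℕ × ℤ} (hx : x ∈ family k B q) :
    x.1 < B * (k + 1) := by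
  simp only [family, Multiset.mem_cons, Multiset.mem_map] at hx
  rcases hx with rfl | ⟨i, -, rfl⟩
  · have := q.2.1.2
    simp only [lastTriple]
    nlinarith
  · simp only [freeTriple]
    have h1 := (q.1 i).1.2
    have h2 : B * ((i : ℕ) + 1 + 1) ≤ B * (k + 1) := Nat.mul_le_mul le_rfl (by omega)
    rw [mul_add B (↑i + 1) 1] at h2
    omega

theorem family_injective (k B : ℕ) : Function.Injective (family k B) := by
  rintro ⟨f, p⟩ ⟨f', p'⟩ h
  have hf : f = f' := by
    funext i
    have hi : freeTriple k B f i ∈ family k B (f', p') := by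
      rw [← h]; simp [family]
    simp only [family, Multiset.mem_cons, Multiset.mem_map] at hi
    rcases hi with hi | ⟨j, -, hj⟩
    · have h1 := congrArg Prod.fst hi
      simp only [freeTriple, lastTriple] at h1
      have := p'.1.2
      nlinarith
    · have h1 := congrArg Prod.fst hj
      have h2 := congrArg (fun x => x.2.1) hj
      have h3 := congrArg (fun x => x.2.2) hj
      simp only [freeTriple] at h1 h2 h3
      have hB := (f i).1.2
      have hB' := (f' j).1.2
      have hq : ((j : ℕ) + 1) = (i : ℕ) + 1 := by
        -- the index of a free triple is recovered from its `n`-entry by division by `B`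
        have e := congrArg (· / B) h1
        simpa [Nat.mul_add_div (by omega : 0 < B), Nat.div_eq_of_lt hB,
          Nat.div_eq_of_lt hB'] using e
      obtain rfl : j = i := Fin.ext (by omega)
      ext
      · omega
      · omega
      · omega
  subst hf
  simp only [family] at h
  rw [Multiset.cons_inj_left] at h
  have h1 := congrArg Prod.fst h
  have h2 := congrArg (fun x => x.2.1) h
  simp only [lastTriple] at h1 h2
  exact Prod.ext rfl (Prod.ext (Fin.ext h1) (Fin.ext (by simp only; omega)))

/-- Dependent multisets: an element of `family` together with a triple `(n, l, 0)` with `l` even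
whose `n`-entry is larger than all those of the family. -/
def depFamily (k B : ℕ)
    (q : (Fin B × Fin B) × ((Fin k → Fin B × Fin B × Fin B) × (Fin B × Fin B))) :
    Multiset (ℕ × ℕ × ℤ) :=
  (B * (k + 1) + q.1.1, 2 * q.1.2, 0) ::ₘ family k B q.2

theorem depFamily_mem (k B : ℕ) (q) :
    depFamily k B q ∈ DO3 (k + 2) ((k ^ 2 + 6 * k + 7) * B) := by
  obtain ⟨h1, h2, h3, h4, h5⟩ := family_mem k B q.2
  refine ⟨⟨by simp [depFamily, h1], ?_, ?_, ?_, ?_⟩,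
    {(B * (k + 1) + (q.1.1 : ℕ), 2 * (q.1.2 : ℕ), 0)}, family k B q.2,
    by simp, by simp [family], by simp [depFamily], by simp, by simp, h3, h4⟩
  · intro x hx
    rcases Multiset.mem_cons.1 hx with rfl | hx
    · simp
    · exact h2 x hx
  · simp [depFamily, h3]
  · simp only [depFamily, Multiset.map_cons, Multiset.sum_cons]
    exact (even_two_mul _).add h4
  · simp only [depFamily, Multiset.map_cons, Multiset.sum_cons]
    have e1 := q.1.1.2
    have e2 := q.1.2.2
    nlinarith

theorem depFamily_injective (k B : ℕ) : Function.Injective (depFamily k B) := by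
  rintro ⟨x, q⟩ ⟨x', q'⟩ h
  have hx : ((B * (k + 1) + (x.1 : ℕ), 2 * (x.2 : ℕ), 0) : ℕ × ℕ × ℤ) ∈
      depFamily k B (x', q') := by
    rw [← h]; simp [depFamily]
  have hxx : x = x' := by
    rcases Multiset.mem_cons.1 hx with hx | hx
    · simp only [Prod.mk.injEq] at hx
      ext
      · omega
      · omega
    · have := family_fst_lt hx
      simp only at this
      omega
  subst hxx
  simp only [depFamily] at h
  rw [Multiset.cons_inj_right] at h
  rw [family_injective k B h]

theorem le_KO3_ncard (k B D : ℕ) (h : (k ^ 2 + 5 * k + 3) * B ≤ D) :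
    B ^ (3 * k + 2) ≤ (KO3 (k + 1) D).ncard := by
  have h1 : Set.range (family k B) ⊆ KO3 (k + 1) D := by
    rintro _ ⟨q, rfl⟩
    exact KO3_mono h (family_mem k B q)
  have h2 := Set.ncard_le_ncard h1 (KO3_finite k D)
  rw [← Set.image_univ, Set.ncard_image_of_injective _ (family_injective k B),
    Set.ncard_univ, Nat.card_eq_fintype_card] at h2
  simp only [Fintype.card_prod, Fintype.card_pi, Fintype.card_fin, Finset.prod_const,
    Finset.card_univ] at h2
  calc _ = (B * (B * B)) ^ k * (B * B) := by ring
    _ ≤ _ := h2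

theorem le_DO3_ncard (k B D : ℕ) (h : (k ^ 2 + 6 * k + 7) * B ≤ D) :
    B ^ (3 * k + 4) ≤ (DO3 (k + 2) D).ncard := by
  have h1 : Set.range (depFamily k B) ⊆ DO3 (k + 2) D := by
    rintro _ ⟨q, rfl⟩
    exact ⟨KO3_mono h (depFamily_mem k B q).1, (depFamily_mem k B q).2⟩
  have h2 := Set.ncard_le_ncard h1 ((KO3_finite (k + 1) D).subset fun _ hs => hs.1)
  rw [← Set.image_univ, Set.ncard_image_of_injective _ (depFamily_injective k B),
    Set.ncard_univ, Nat.card_eq_fintype_card] at h2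
  simp only [Fintype.card_prod, Fintype.card_pi, Fintype.card_fin, Finset.prod_const,
    Finset.card_univ] at h2
  calc _ = B * B * ((B * (B * B)) ^ k * (B * B)) := by ring
    _ ≤ _ := h2

/-! ### The ratio -/

/-- For fixed `ν ≥ 3`, the ratio `#D_{O(3)}(ν, D) / #K_{O(3)}(ν, D)` is `Θ(1/D)`
as `D → ∞`. -/
theorem DO3_ratio_theta (ν : ℕ) (hν : 3 ≤ ν) :
    ∃ c C : ℝ, 0 < c ∧ c ≤ C ∧ ∃ D₀ : ℕ, ∀ D : ℕ, D₀ ≤ D →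
      c / (D : ℝ) ≤ ((DO3 ν D).ncard : ℝ) / ((KO3 ν D).ncard : ℝ) ∧
      ((DO3 ν D).ncard : ℝ) / ((KO3 ν D).ncard : ℝ) ≤ C / (D : ℝ) := by
  obtain ⟨n, rfl⟩ : ∃ n, ν = n + 2 := ⟨ν - 2, by omega⟩
  obtain ⟨M, hM⟩ : ∃ M, M = (n + 1) ^ 2 + 5 * (n + 1) + 3 := ⟨_, rfl⟩
  have hM0 : 0 < M := by omega
  have hM0' : (0 : ℝ) < M := by exact_mod_cast hM0
  let c : ℝ := (1 / (2 * M)) ^ (3 * n + 4) / 12 ^ (n + 2)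
  let C : ℝ := (n + 1) * 12 ^ (n + 2) / (1 / (2 * M)) ^ (3 * n + 5)
  refine ⟨c, max c C, by positivity, le_max_left _ _, M, fun D hD => ?_⟩
  have hD1 : 1 ≤ D := by omega
  have hD0 : (0 : ℝ) < D := by exact_mod_cast hD1
  -- scale of the families realising the lower bounds
  obtain ⟨B, hBdef⟩ : ∃ B, B = D / M := ⟨_, rfl⟩
  have hB1 : 1 ≤ B := hBdef ▸ (Nat.one_le_div_iff hM0).2 hD
  have hMB : M * B ≤ D := hBdef ▸ Nat.mul_div_le D M
  have hDB : D < M * (B + 1) := hBdef ▸ Nat.lt_mul_div_succ D hM0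
  have hB : 1 / (2 * M) * (D : ℝ) ≤ B := by
    have h1 : D ≤ 2 * M * B := by nlinarith
    have h2 : (D : ℝ) ≤ 2 * M * B := by exact_mod_cast h1
    rw [one_div, inv_mul_le_iff₀ (by positivity)]
    exact h2
  have hKl : ((1 / (2 * M) : ℝ) * D) ^ (3 * n + 5) ≤ (KO3 (n + 2) D).ncard := by
    have h := le_KO3_ncard (n + 1) B D (hM ▸ hMB)
    calc _ ≤ (B : ℝ) ^ (3 * n + 5) := by gcongr
      _ ≤ _ := by exact_mod_cast h
  have hDl : ((1 / (2 * M) : ℝ) * D) ^ (3 * n + 4) ≤ (DO3 (n + 2) D).ncard := by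
    have h := le_DO3_ncard n B D ((Nat.mul_le_mul (by rw [hM]; nlinarith) le_rfl).trans hMB)
    calc _ ≤ (B : ℝ) ^ (3 * n + 4) := by gcongr
      _ ≤ _ := by exact_mod_cast h
  have hKu : ((KO3 (n + 2) D).ncard : ℝ) ≤ 12 ^ (n + 2) * (D : ℝ) ^ (3 * n + 5) := by
    exact_mod_cast KO3_ncard_le (n + 1) D hD1
  have hDu : ((DO3 (n + 2) D).ncard : ℝ) ≤
      (n + 1) * (12 ^ (n + 2) * (D : ℝ) ^ (3 * n + 4)) := by
    exact_mod_cast DO3_ncard_le n D hD1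
  have hKpos : (0 : ℝ) < (KO3 (n + 2) D).ncard := lt_of_lt_of_le (by positivity) hKl
  constructor
  · calc c / D = ((1 / (2 * M) : ℝ) * D) ^ (3 * n + 4) /
          (12 ^ (n + 2) * (D : ℝ) ^ (3 * n + 5)) := by
          simp only [c, mul_pow]
          field_simp
          ring
      _ ≤ _ := by gcongr
  · calc _ ≤ (n + 1) * (12 ^ (n + 2) * (D : ℝ) ^ (3 * n + 4)) /
          ((1 / (2 * M) : ℝ) * D) ^ (3 * n + 5) := by gcongr
      _ = C / D := by
          simp only [C, mul_pow]
          field_simp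
          ring
      _ ≤ max c C / D := by
          gcongr
          exact le_max_right _ _
end

section
/- For every fixed integer ν ≥ 3, the ratio #D_{SO(2)}(ν, D) / #K_{SO(2)}(ν, D) is Θ(1/D) as D → ∞, i.e., there exist constants 0 < c ≤ C and D₀ such that c/D ≤ #D_{SO(2)}(ν, D)/#K_{SO(2)}(ν, D) ≤ C/D for all D ≥ D₀. -/
/-!
The number of elements of `KSO2 ν D` is of exact order `D ^ (2ν - 1)`, since there are `2ν` integer
parameters of size `O(D)` and one linear relation, while `DSO2 ν D` has exact order `D ^ (2ν - 2)`,
since a splitting imposes a second linear relation.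

Upper bounds: an element of `KSO2 (j + 1) D` is determined by `j` arbitrary pairs and the `n`-entry
of the last pair (`KSO2_upper`), and every dependent multiset is a sum of an element of
`KSO2 (j + 1) D` and one of `KSO2 (ν - (j + 1)) D` for some `j + 1 < ν` (`DSO2_upper`).

Lower bounds: for `L ≈ D / (2ν²)` consider multisets whose `t`-th pair has its `n`-entry in the
interval `[tL, (t+1)L)`. These intervals are disjoint, so the multiset remembers the ordering of its
pairs and no division by symmetries is needed (`lower_count`). The `m`-entries are then taken to be
`(-∑ g, g)` for `KSO2` and `(0, -∑ g, g)` for `DSO2`, with `g` an arbitrary vector with entries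
in `[0, L)`.
-/

/-- `K_{SO(2)}(ν, D)`: multisets of `ν` pairs `(n, m) ∈ ℕ × ℤ` with `m`-entries
summing to `0` and total degree `∑ (n + |m|) ≤ D`. -/
def KSO2 (ν D : ℕ) : Set (Multiset (ℕ × ℤ)) :=
  {s | Multiset.card s = ν ∧ (s.map Prod.snd).sum = 0 ∧
    (s.map (fun x => x.1 + x.2.natAbs)).sum ≤ D}

/-- A multiset of pairs is *dependent* if it splits as a union of two nonempty
multisets whose `m`-entries separately sum to `0`. -/
def IsDependentSO2 (s : Multiset (ℕ × ℤ)) : Prop :=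
  ∃ s₁ s₂ : Multiset (ℕ × ℤ), s₁ ≠ 0 ∧ s₂ ≠ 0 ∧ s = s₁ + s₂ ∧
    (s₁.map Prod.snd).sum = 0 ∧ (s₂.map Prod.snd).sum = 0

/-- `D_{SO(2)}(ν, D)`: the dependent elements of `K_{SO(2)}(ν, D)`. -/
def DSO2 (ν D : ℕ) : Set (Multiset (ℕ × ℤ)) :=
  {s | s ∈ KSO2 ν D ∧ IsDependentSO2 s}

theorem KSO2_upper (j D : ℕ) :
    (KSO2 (j + 1) D).Finite ∧ (KSO2 (j + 1) D).ncard ≤ (2 * D + 1) ^ (2 * j + 1) := by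
  classical
  let B : Finset (ℕ × ℤ) := Finset.range (D + 1) ×ˢ Finset.Icc (-(D : ℤ)) D
  let P : Finset ((Fin j → ℕ × ℤ) × ℕ) :=
    Fintype.piFinset (fun _ : Fin j => B) ×ˢ Finset.range (D + 1)
  let Φ : (Fin j → ℕ × ℤ) × ℕ → Multiset (ℕ × ℤ) := fun p =>
    (p.2, -((Finset.univ.val.map p.1).map Prod.snd).sum) ::ₘ Finset.univ.val.map p.1
  have hsub : KSO2 (j + 1) D ⊆ (P.image Φ : Finset _) := by
    rintro s ⟨hc, hm, hd⟩
    have hle : ∀ x ∈ s, x.1 + x.2.natAbs ≤ D := fun x hx =>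
      (Multiset.single_le_sum (fun _ _ => Nat.zero_le _) _
        (Multiset.mem_map_of_mem (fun x : ℕ × ℤ => x.1 + x.2.natAbs) hx)).trans hd
    obtain ⟨l, rfl⟩ : ∃ l : List (ℕ × ℤ), (l : Multiset (ℕ × ℤ)) = s := Quot.exists_rep s
    match l, hc with
    | x :: l, hc =>
      have hl : l.length = j := by simpa using hc
      subst hl
      have hof : Finset.univ.val.map l.get = (l : Multiset (ℕ × ℤ)) := by
        rw [Fin.univ_val_map, List.ofFn_get]
      rw [Finset.mem_coe, Finset.mem_image]
      refine ⟨(l.get, x.1), ?_, ?_⟩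
      · simp only [P, B, Finset.mem_product, Fintype.mem_piFinset, Finset.mem_range,
          Finset.mem_Icc]
        refine ⟨fun i => ?_, ?_⟩
        · have := hle (l.get i) (by simp)
          omega
        · have := hle x (by simp)
          omega
      · simp only [Φ, hof]
        have : x.2 + (l.map Prod.snd).sum = 0 := by simpa using hm
        have h2 : -(l.map Prod.snd).sum = x.2 := by omega
        simp [h2]
  have hfin : (KSO2 (j + 1) D).Finite := (Finset.finite_toSet _).subset hsub
  refine ⟨hfin, ?_⟩
  calc (KSO2 (j + 1) D).ncard ≤ (P.image Φ).card := by
        rw [← Set.ncard_coe_finset]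
        exact Set.ncard_le_ncard hsub (Finset.finite_toSet _)
    _ ≤ P.card := Finset.card_image_le
    _ = ((D + 1) * (2 * D + 1)) ^ j * (D + 1) := by
        have : ((D : ℤ) + 1 + D).toNat = 2 * D + 1 := by omega
        simp [P, B, this]
    _ ≤ ((2 * D + 1) * (2 * D + 1)) ^ j * (2 * D + 1) := by gcongr <;> omega
    _ = (2 * D + 1) ^ (2 * j + 1) := by rw [← pow_two, ← pow_mul, pow_succ]

theorem DSO2_upper (k D : ℕ) :
    (DSO2 (k + 2) D).ncard ≤ (k + 1) * (2 * D + 1) ^ (2 * k + 2) := by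
  classical
  let U : ℕ → Set (Multiset (ℕ × ℤ)) := fun j =>
    (fun p : Multiset (ℕ × ℤ) × Multiset (ℕ × ℤ) => p.1 + p.2) ''
      (KSO2 (j + 1) D ×ˢ KSO2 (k - j + 1) D)
  have hU : ∀ j, (U j).Finite := fun j =>
    ((KSO2_upper j D).1.prod (KSO2_upper (k - j) D).1).image _
  have hsub : DSO2 (k + 2) D ⊆ ⋃ j ∈ Finset.range (k + 1), U j := by
    rintro s ⟨⟨hc, hm, hd⟩, s₁, s₂, h₁, h₂, rfl, hm₁, hm₂⟩
    have c₁ := Multiset.card_pos.2 h₁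
    have c₂ := Multiset.card_pos.2 h₂
    simp only [Multiset.card_add, Multiset.map_add, Multiset.sum_add] at hc hd
    simp only [Set.mem_iUnion]
    refine ⟨s₁.card - 1, Finset.mem_range.2 (by omega), (s₁, s₂), ⟨⟨?_, hm₁, ?_⟩, ?_, hm₂, ?_⟩, rfl⟩
      <;> dsimp only <;> omega
  calc (DSO2 (k + 2) D).ncard ≤ (⋃ j ∈ Finset.range (k + 1), U j).ncard :=
        Set.ncard_le_ncard hsub ((Finset.range (k + 1)).finite_toSet.biUnion fun j _ => hU j)
    _ ≤ ∑ j ∈ Finset.range (k + 1), (U j).ncard := Finset.set_ncard_biUnion_le _ _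
    _ ≤ ∑ j ∈ Finset.range (k + 1), (2 * D + 1) ^ (2 * k + 2) := by
        refine Finset.sum_le_sum fun j hj => ?_
        have hj' := Finset.mem_range.1 hj
        calc (U j).ncard ≤ (KSO2 (j + 1) D ×ˢ KSO2 (k - j + 1) D).ncard :=
              Set.ncard_image_le ((KSO2_upper j D).1.prod (KSO2_upper (k - j) D).1)
          _ = (KSO2 (j + 1) D).ncard * (KSO2 (k - j + 1) D).ncard := Set.ncard_prod
          _ ≤ (2 * D + 1) ^ (2 * j + 1) * (2 * D + 1) ^ (2 * (k - j) + 1) :=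
              Nat.mul_le_mul (KSO2_upper j D).2 (KSO2_upper (k - j) D).2
          _ = (2 * D + 1) ^ (2 * k + 2) := by
              rw [← pow_add]
              congr 1
              omega
    _ = (k + 1) * (2 * D + 1) ^ (2 * k + 2) := by simp

/-- The multiset of pairs whose `t`-th member is `(tL + a t, m t)`; the `n`-entry of that member lies
in the `t`-th interval of length `L`. -/
def boxMultiset {ν L : ℕ} (a : Fin ν → Fin L) (m : Fin ν → ℤ) : Multiset (ℕ × ℤ) :=
  Finset.univ.val.map fun t : Fin ν => ((t : ℕ) * L + (a t : ℕ), m t)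

/-- Dividing an `n`-entry by `L` recovers the index, so the multiset determines both vectors. -/
theorem boxMultiset_inj {ν L : ℕ} {a a' : Fin ν → Fin L} {m m' : Fin ν → ℤ}
    (h : boxMultiset a m = boxMultiset a' m') : a = a' ∧ m = m' := by
  have key : ∀ t, a t = a' t ∧ m t = m' t := by
    intro t
    have hL : 0 < L := (a t).pos
    have hmem : ((t : ℕ) * L + (a t : ℕ), m t) ∈ boxMultiset a' m' := by
      rw [← h]
      exact Multiset.mem_map.2 ⟨t, Finset.mem_univ t, rfl⟩
    obtain ⟨u, -, hu⟩ := Multiset.mem_map.1 hmem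
    obtain ⟨h1, h2⟩ := Prod.mk.inj hu
    have hdiv : ∀ (x : ℕ) (y : Fin L), (x * L + (y : ℕ)) / L = x := fun x y => by
      rw [mul_comm, Nat.mul_add_div hL, Nat.div_eq_of_lt y.2, add_zero]
    have hut : u = t := by
      apply Fin.ext
      rw [← hdiv u (a' u), h1, hdiv]
    subst hut
    exact ⟨Fin.ext (by omega), h2.symm⟩
  exact ⟨funext fun t => (key t).1, funext fun t => (key t).2⟩

theorem boxMultiset_mem {ν L D : ℕ} (hD : 2 * ν ^ 2 * L ≤ D) (a : Fin ν → Fin L) (m : Fin ν → ℤ)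
    (hm : ∑ t, m t = 0) (hb : ∀ t, (m t).natAbs ≤ ν * L) : boxMultiset a m ∈ KSO2 ν D := by
  refine ⟨by simp [boxMultiset], ?_, ?_⟩
  · rw [boxMultiset, Multiset.map_map]
    exact hm
  · rw [boxMultiset, Multiset.map_map]
    change ∑ t : Fin ν, ((t : ℕ) * L + (a t : ℕ) + (m t).natAbs) ≤ D
    calc _ ≤ ∑ t : Fin ν, (2 * ν * L) := by
          refine Finset.sum_le_sum fun t _ => ?_
          have h1 : ((t : ℕ) + 1) * L ≤ ν * L := Nat.mul_le_mul_right _ t.2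
          have h2 := (a t).2
          have h3 := hb t
          nlinarith
      _ = 2 * ν ^ 2 * L := by
          simp
          ring
      _ ≤ D := hD

theorem lower_count {ν k L : ℕ} {S : Set (Multiset (ℕ × ℤ))} (hS : S.Finite)
    (h : (Fin k → Fin L) → Fin ν → ℤ) (hinj : Function.Injective h)
    (hmem : ∀ (a : Fin ν → Fin L) g, boxMultiset a (h g) ∈ S) : L ^ (ν + k) ≤ S.ncard := by
  have hΨ : Function.Injective
      fun p : (Fin ν → Fin L) × (Fin k → Fin L) => boxMultiset p.1 (h p.2) := by
    intro p q hpq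
    obtain ⟨h1, h2⟩ := boxMultiset_inj hpq
    exact Prod.ext h1 (hinj h2)
  calc L ^ (ν + k) = Nat.card ((Fin ν → Fin L) × (Fin k → Fin L)) := by
        simp [pow_add]
    _ = (Set.range fun p : (Fin ν → Fin L) × (Fin k → Fin L) =>
          boxMultiset p.1 (h p.2)).ncard := by
        rw [← Set.image_univ, Set.ncard_image_of_injective _ hΨ, Set.ncard_univ]
    _ ≤ S.ncard := Set.ncard_le_ncard (by rintro _ ⟨p, rfl⟩; exact hmem _ _) hS

/-- The vector `(-∑ g, g)`, of sum zero. -/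
def balanced {k L : ℕ} (g : Fin k → Fin L) : Fin (k + 1) → ℤ :=
  Fin.cons (-∑ i, ((g i : ℕ) : ℤ)) fun i => ((g i : ℕ) : ℤ)

theorem balanced_sum {k L : ℕ} (g : Fin k → Fin L) : ∑ t, balanced g t = 0 := by
  simp [balanced, Fin.sum_univ_succ]

theorem balanced_injective {k L : ℕ} :
    Function.Injective (balanced : (Fin k → Fin L) → Fin (k + 1) → ℤ) := by
  intro g g' h
  funext i
  have := congrFun h i.succ
  simp only [balanced, Fin.cons_succ] at this
  exact Fin.ext (by exact_mod_cast this)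

theorem balanced_bound {k L : ℕ} (g : Fin k → Fin L) (t : Fin (k + 1)) :
    (balanced g t).natAbs ≤ (k + 1) * L := by
  refine Fin.cases ?_ (fun i => ?_) t
  · simp only [balanced, Fin.cons_zero, Int.natAbs_neg]
    rw [← Nat.cast_sum, Int.natAbs_natCast]
    calc ∑ i, (g i : ℕ) ≤ ∑ _i : Fin k, L := Finset.sum_le_sum fun i _ => (g i).2.le
      _ = k * L := by simp
      _ ≤ (k + 1) * L := Nat.mul_le_mul_right _ (Nat.le_succ k)
  · simp only [balanced, Fin.cons_succ, Int.natAbs_natCast]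
    have := (g i).2
    nlinarith

theorem KSO2_lower {k L D : ℕ} (hD : 2 * (k + 1) ^ 2 * L ≤ D) :
    L ^ (2 * k + 1) ≤ (KSO2 (k + 1) D).ncard := by
  have := lower_count (KSO2_upper k D).1 (balanced (k := k) (L := L)) balanced_injective
    fun a g => boxMultiset_mem hD a _ (balanced_sum g) (balanced_bound g)
  rwa [show 2 * k + 1 = k + 1 + k by omega]

theorem DSO2_lower {k L D : ℕ} (hD : 2 * (k + 2) ^ 2 * L ≤ D) :
    L ^ (2 * k + 2) ≤ (DSO2 (k + 2) D).ncard := by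
  have hfin : (DSO2 (k + 2) D).Finite := (KSO2_upper (k + 1) D).1.subset fun _ hs => hs.1
  have := lower_count (ν := k + 2) hfin
    (fun g : Fin k → Fin L => (Fin.cons 0 (balanced g) : Fin (k + 2) → ℤ))
    (fun g g' h => balanced_injective (Fin.cons_injective2 h).2) ?_
  · rwa [show 2 * k + 2 = k + 2 + k by omega]
  · intro a g
    refine ⟨boxMultiset_mem hD a _ ?_ ?_, ?_⟩
    · simp [Fin.sum_univ_succ (n := k + 1), balanced_sum]
    · refine Fin.cases (by simp) fun i => ?_
      rw [Fin.cons_succ]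
      exact (balanced_bound g i).trans (Nat.mul_le_mul_right _ (by omega))
    · refine ⟨{((a 0 : ℕ), 0)}, Finset.univ.val.map fun t : Fin (k + 1) =>
        ((t.succ : ℕ) * L + (a t.succ : ℕ), balanced g t), by simp, ?_, ?_, by simp, ?_⟩
      · rw [← Multiset.card_pos]
        simp
      · rw [boxMultiset, Fin.univ_val_map, Fin.univ_val_map, List.ofFn_succ]
        simp
      · rw [Multiset.map_map]
        exact balanced_sum g

/-- For fixed `ν ≥ 3`, the ratio `#D_{SO(2)}(ν, D) / #K_{SO(2)}(ν, D)` is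
`Θ(1/D)` as `D → ∞`. -/
theorem DSO2_ratio_theta (ν : ℕ) (hν : 3 ≤ ν) :
    ∃ c C : ℝ, 0 < c ∧ c ≤ C ∧ ∃ D₀ : ℕ, ∀ D : ℕ, D₀ ≤ D →
      c / (D : ℝ) ≤ ((DSO2 ν D).ncard : ℝ) / ((KSO2 ν D).ncard : ℝ) ∧
      ((DSO2 ν D).ncard : ℝ) / ((KSO2 ν D).ncard : ℝ) ≤ C / (D : ℝ) := by
  obtain ⟨k, rfl⟩ : ∃ k, ν = k + 2 := ⟨ν - 2, by omega⟩
  -- `q = 2ν²` is the divisor in `L = D / q`; for `D ≥ q` the rounding costs at most a factor `2`.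
  obtain ⟨q, hq⟩ : ∃ q, q = 2 * (k + 2) ^ 2 := ⟨_, rfl⟩
  have hq0 : 0 < q := by rw [hq]; positivity
  have hqR : (0 : ℝ) < q := by exact_mod_cast hq0
  obtain ⟨r, hr⟩ : ∃ r : ℝ, r = 1 / (2 * q) := ⟨_, rfl⟩
  have hr0 : 0 < r := by rw [hr]; positivity
  refine ⟨r ^ (2 * k + 2) / 3 ^ (2 * k + 3),
    max (r ^ (2 * k + 2) / 3 ^ (2 * k + 3)) ((k + 1) * 3 ^ (2 * k + 2) / r ^ (2 * k + 3)),
    by positivity, le_max_left _ _, q, fun D hD => ?_⟩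
  have hD0 : 0 < D := hq0.trans_le hD
  have hDR : (0 : ℝ) < D := by exact_mod_cast hD0
  obtain ⟨L, hL⟩ : ∃ L, L = D / q := ⟨_, rfl⟩
  have hLD : q * L ≤ D := hL ▸ Nat.mul_div_le D q
  have hLr : r * D ≤ L := by
    have h1 : D < q * (L + 1) := by
      rw [hL]
      exact Nat.lt_mul_div_succ D hq0
    have h2 : 1 ≤ L := by
      rw [hL]
      exact Nat.div_pos hD hq0
    have h3 : D ≤ 2 * q * L := by nlinarith
    have h4 : (D : ℝ) ≤ 2 * q * L := by exact_mod_cast h3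
    rw [hr, one_div, inv_mul_le_iff₀ (by positivity)]
    exact h4
  have h3D : (2 * D + 1 : ℝ) ≤ 3 * D := by
    have : (1 : ℝ) ≤ D := by exact_mod_cast hD0
    linarith
  have Kup : ((KSO2 (k + 2) D).ncard : ℝ) ≤ (3 * D) ^ (2 * k + 3) := by
    have h : ((KSO2 (k + 2) D).ncard : ℝ) ≤ (2 * D + 1) ^ (2 * k + 3) := by
      exact_mod_cast (KSO2_upper (k + 1) D).2
    exact h.trans (by gcongr)
  have Dup : ((DSO2 (k + 2) D).ncard : ℝ) ≤ (k + 1) * (3 * D) ^ (2 * k + 2) := by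
    have h : ((DSO2 (k + 2) D).ncard : ℝ) ≤ (k + 1) * (2 * D + 1) ^ (2 * k + 2) := by
      exact_mod_cast DSO2_upper k D
    exact h.trans (by gcongr)
  have Klo : (r * D) ^ (2 * k + 3) ≤ ((KSO2 (k + 2) D).ncard : ℝ) := by
    have h : (L : ℝ) ^ (2 * k + 3) ≤ ((KSO2 (k + 2) D).ncard : ℝ) := by
      exact_mod_cast KSO2_lower (k := k + 1) (hq ▸ hLD)
    exact le_trans (by gcongr) h
  have Dlo : (r * D) ^ (2 * k + 2) ≤ ((DSO2 (k + 2) D).ncard : ℝ) := by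
    have h : (L : ℝ) ^ (2 * k + 2) ≤ ((DSO2 (k + 2) D).ncard : ℝ) := by
      exact_mod_cast DSO2_lower (hq ▸ hLD)
    exact le_trans (by gcongr) h
  have hK0 : (0 : ℝ) < (KSO2 (k + 2) D).ncard := lt_of_lt_of_le (by positivity) Klo
  constructor
  · calc r ^ (2 * k + 2) / 3 ^ (2 * k + 3) / (D : ℝ)
        = (r * D) ^ (2 * k + 2) / (3 * D) ^ (2 * k + 3) := by
          rw [mul_pow, mul_pow, pow_succ (D : ℝ) (2 * k + 2)]
          field_simp
      _ ≤ _ := by gcongr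
  · calc ((DSO2 (k + 2) D).ncard : ℝ) / ((KSO2 (k + 2) D).ncard : ℝ)
        ≤ (k + 1) * (3 * D) ^ (2 * k + 2) / (r * D) ^ (2 * k + 3) := by gcongr
      _ = (k + 1) * 3 ^ (2 * k + 2) / r ^ (2 * k + 3) / D := by
          rw [mul_pow, mul_pow, pow_succ (D : ℝ) (2 * k + 2)]
          field_simp
      _ ≤ _ := by
          gcongr
          exact le_max_right _ _
end

section
/- For every fixed integer ν ≥ 3, as D → ∞ the cardinalities satisfy #K̂^f_{O(3)}(ν, D) = Θ(D^{4ν−1}) and #D̂^f_{O(3)}(ν, D) = Θ(D^{4ν−2}); consequently the ratio #D̂^f_{O(3)}(ν, D) / #K̂^f_{O(3)}(ν, D) is Θ(1/D). -/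
/-! The counting is elementary. Every coordinate of an element of `KhatO3f ν D` lies in `[-D, D]`.

*Upper bounds.* The equation `∑ m = 0` determines one coordinate of `m` from the others, so at most
`(2D+1)^(4ν-1)` elements exist. If moreover `∑_{t ∈ S} m t = 0` for a nonempty proper `S`, then one
coordinate inside `S` and one outside `S` are determined by the rest, so each of the at most `2^ν`
sets `S` contributes at most `(2D+1)^(4ν-2)` elements (`ncard_le_of_determined`).

*Lower bounds.* With `N = ⌊D / (6ν³)⌋`, take `l t = 2 (ν² N + p t)` and `n t`, `k t`, `p t` free in
`[0, N)`; for `t ≥ z` let `m t = -(t N + a t)` with `a t` free in `[0, N)`, let `m t = 0` for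
`1 ≤ t < z`, and let `m 0` balance the sum. Monotonicity of `m` is automatic, because the `m t` lie
in consecutive blocks. This gives `N^(4ν-z)` elements (`pow_le_ncard`). The choice `z = 1` handles
`KhatO3f`; for `z = 2` all these elements are dependent through `S = {1}`, since `m 1 = 0` and `l 1`
is even. -/

/-- `K̂^f_{O(3)}(ν, D)`: quadruples of tuples `(m, l, n, k) ∈ (ℤ^ν)⁴` with `m`
weakly decreasing and summing to `0`; `l` nonnegative, `|mᵗ| ≤ lᵗ`, `∑ lᵗ` even;
`n` and `k` nonnegative; and `∑ (nᵗ + lᵗ + kᵗ) ≤ D`. -/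
def KhatO3f (ν D : ℕ) : Set ((Fin ν → ℤ) × (Fin ν → ℤ) × (Fin ν → ℤ) × (Fin ν → ℤ)) :=
  {x | (∀ i j : Fin ν, i ≤ j → x.1 j ≤ x.1 i) ∧ (∑ t, x.1 t) = 0 ∧
    (∀ t, 0 ≤ x.2.1 t) ∧ (∀ t, |x.1 t| ≤ x.2.1 t) ∧ Even (∑ t, x.2.1 t) ∧
    (∀ t, 0 ≤ x.2.2.1 t) ∧ (∀ t, 0 ≤ x.2.2.2 t) ∧
    (∑ t, (x.2.2.1 t + x.2.1 t + x.2.2.2 t)) ≤ (D : ℤ)}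

/-- An element is *dependent* if some nonempty proper subset `S` of the index
set has `∑_{t ∈ S} mᵗ = 0` and `∑_{t ∈ S} lᵗ` even. -/
def IsDependentO3f {ν : ℕ}
    (x : (Fin ν → ℤ) × (Fin ν → ℤ) × (Fin ν → ℤ) × (Fin ν → ℤ)) : Prop :=
  ∃ S : Finset (Fin ν), S.Nonempty ∧ S ≠ Finset.univ ∧
    (∑ t ∈ S, x.1 t) = 0 ∧ Even (∑ t ∈ S, x.2.1 t)

/-- `D̂^f_{O(3)}(ν, D)`: the dependent elements of `K̂^f_{O(3)}(ν, D)`. -/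
def DhatO3f (ν D : ℕ) : Set ((Fin ν → ℤ) × (Fin ν → ℤ) × (Fin ν → ℤ) × (Fin ν → ℤ)) :=
  {x | x ∈ KhatO3f ν D ∧ IsDependentO3f x}

/-! ### Upper bounds -/

/-- The type of quadruples `(m, l, n, k)` of integer tuples. -/
abbrev Quad (ν : ℕ) : Type := (Fin ν → ℤ) × (Fin ν → ℤ) × (Fin ν → ℤ) × (Fin ν → ℤ)

lemma KhatO3f_bounds {ν D : ℕ} {x : Quad ν} (hx : x ∈ KhatO3f ν D) (t : Fin ν) :
    x.1 t ∈ Finset.Icc (-(D : ℤ)) D ∧ x.2.1 t ∈ Finset.Icc (-(D : ℤ)) D ∧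
    x.2.2.1 t ∈ Finset.Icc (-(D : ℤ)) D ∧ x.2.2.2 t ∈ Finset.Icc (-(D : ℤ)) D := by
  obtain ⟨-, -, hl, hml, -, hn, hk, hD⟩ := hx
  have h1 : x.2.2.1 t + x.2.1 t + x.2.2.2 t ≤ ∑ t, (x.2.2.1 t + x.2.1 t + x.2.2.2 t) :=
    Finset.single_le_sum (f := fun t => x.2.2.1 t + x.2.1 t + x.2.2.2 t)
      (fun i _ => by have := hl i; have := hn i; have := hk i; positivity) (Finset.mem_univ t)
  have := hl t
  have := hn t
  have := hk t
  have h2 := abs_le.1 (hml t)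
  simp only [Finset.mem_Icc]
  omega

/-- If the elements of a part `A` of `KhatO3f ν D` are determined by all their coordinates except
the `m t` with `t ∈ W`, then `A` is finite and has at most `(2D+1)^(4ν-|W|)` elements. -/
lemma ncard_le_of_determined_s17 {ν D : ℕ} (A : Set (Quad ν)) (hA : A ⊆ KhatO3f ν D)
    (W : Finset (Fin ν))
    (hW : ∀ x ∈ A, ∀ y ∈ A, (∀ t, t ∉ W → x.1 t = y.1 t) → x.2 = y.2 → x.1 = y.1) :
    A.Finite ∧ A.ncard ≤ (2 * D + 1) ^ (4 * ν - W.card) := by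
  classical
  let I : Finset ℤ := Finset.Icc (-(D : ℤ)) D
  let P : Finset (Fin ν → ℤ) := Fintype.piFinset (fun _ => I)
  let Q : Finset ({t : Fin ν // t ∉ W} → ℤ) := Fintype.piFinset (fun _ => I)
  let T := Q ×ˢ P ×ˢ P ×ˢ P
  let f : Quad ν → ({t : Fin ν // t ∉ W} → ℤ) × (Fin ν → ℤ) × (Fin ν → ℤ) × (Fin ν → ℤ) :=
    fun x => (fun t => x.1 t, x.2)
  have hmap : Set.MapsTo f A (T : Set _) := by
    intro x hx
    have hb := KhatO3f_bounds (hA hx)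
    simp only [T, f, P, Q, I, Finset.mem_coe, Finset.mem_product, Fintype.mem_piFinset]
    exact ⟨fun t => (hb t).1, fun t => (hb t).2.1, fun t => (hb t).2.2.1, fun t => (hb t).2.2.2⟩
  have hinj : Set.InjOn f A := by
    intro x hx y hy hxy
    have h1 := congrArg Prod.fst hxy
    have h2 : (f x).2 = (f y).2 := congrArg Prod.snd hxy
    change x.2 = y.2 at h2
    exact Prod.ext (hW x hx y hy (fun t ht => congrFun h1 ⟨t, ht⟩) h2) h2
  have hcard : T.card = (2 * D + 1) ^ (4 * ν - W.card) := by
    have hI : I.card = 2 * D + 1 := by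
      simp only [I, Int.card_Icc]; omega
    have hWν : W.card ≤ ν := by simpa using Finset.card_le_univ W
    have hsub : Fintype.card {t : Fin ν // t ∉ W} = ν - W.card := by
      rw [Fintype.card_subtype_compl]; simp
    simp only [T, P, Q, Finset.card_product, Fintype.card_piFinset, hI, Finset.prod_const,
      Finset.card_univ, hsub, Fintype.card_fin, ← pow_add]
    congr 1
    omega
  refine ⟨Set.Finite.of_injOn hmap hinj T.finite_toSet, ?_⟩
  rw [← hcard, ← Set.ncard_coe_finset]
  exact Set.ncard_le_ncard_of_injOn f hmap hinj T.finite_toSet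

lemma KhatO3f_upper {ν : ℕ} (hν : 0 < ν) (D : ℕ) :
    (KhatO3f ν D).Finite ∧ (KhatO3f ν D).ncard ≤ (2 * D + 1) ^ (4 * ν - 1) := by
  have h := ncard_le_of_determined_s17 (KhatO3f ν D) subset_rfl {(⟨0, hν⟩ : Fin ν)} ?_
  · simpa using h
  intro x hx y hy hxy _
  have hs : ∑ t, (x.1 t - y.1 t) = 0 := by
    rw [Finset.sum_sub_distrib, hx.2.1, hy.2.1, sub_zero]
  rw [Finset.sum_eq_single (⟨0, hν⟩ : Fin ν)
    (fun t _ ht => sub_eq_zero.2 (hxy t (by simpa using ht))) (by simp)] at hs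
  funext t
  by_cases ht : t = ⟨0, hν⟩
  · subst ht; exact sub_eq_zero.1 hs
  · exact hxy t (by simpa using ht)

lemma DhatO3f_upper {ν : ℕ} (hν : 0 < ν) (D : ℕ) :
    (DhatO3f ν D).ncard ≤ 2 ^ ν * (2 * D + 1) ^ (4 * ν - 2) := by
  classical
  let F : Finset (Finset (Fin ν)) :=
    Finset.univ.filter (fun S => S.Nonempty ∧ S ≠ Finset.univ)
  let A : Finset (Fin ν) → Set (Quad ν) := fun S => {x ∈ KhatO3f ν D | ∑ t ∈ S, x.1 t = 0}
  have hsub : DhatO3f ν D ⊆ ⋃ S ∈ F, A S := by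
    rintro x ⟨hx, S, h1, h2, h3, -⟩
    simp only [Set.mem_iUnion]
    exact ⟨S, by simp [F, h1, h2], hx, h3⟩
  have hA : ∀ S ∈ F, (A S).ncard ≤ (2 * D + 1) ^ (4 * ν - 2) := by
    intro S hS
    simp only [F, Finset.mem_filter, Finset.mem_univ, true_and] at hS
    obtain ⟨⟨i, hi⟩, hSu⟩ := hS
    obtain ⟨j, hj⟩ : ∃ j, j ∉ S := by
      by_contra! h
      exact hSu (Finset.eq_univ_iff_forall.2 h)
    have hij : i ≠ j := by rintro rfl; exact hj hi
    have h := (ncard_le_of_determined_s17 (A S) (fun x hx => hx.1) {i, j} ?_).2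
    · rwa [Finset.card_pair hij] at h
    intro x hx y hy hxy _
    have hxy' : ∀ t, t ≠ i → t ≠ j → x.1 t = y.1 t := fun t h1 h2 => hxy t (by simp [h1, h2])
    have hsS : ∑ t ∈ S, (x.1 t - y.1 t) = 0 := by
      rw [Finset.sum_sub_distrib, hx.2, hy.2, sub_zero]
    rw [Finset.sum_eq_single_of_mem i hi (fun t ht hti =>
      sub_eq_zero.2 (hxy' t hti (by rintro rfl; exact hj ht)))] at hsS
    have hs : ∑ t, (x.1 t - y.1 t) = 0 := by
      rw [Finset.sum_sub_distrib, hx.1.2.1, hy.1.2.1, sub_zero]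
    rw [Finset.sum_eq_single_of_mem j (Finset.mem_univ j) (fun t _ htj => by
      by_cases hti : t = i
      · rw [hti]; exact hsS
      · exact sub_eq_zero.2 (hxy' t hti htj))] at hs
    funext t
    by_cases hti : t = i
    · rw [hti]; exact sub_eq_zero.1 hsS
    by_cases htj : t = j
    · rw [htj]; exact sub_eq_zero.1 hs
    exact hxy' t hti htj
  have hfin : (⋃ S ∈ F, A S).Finite :=
    (KhatO3f_upper hν D).1.subset (Set.iUnion₂_subset fun S _ x hx => hx.1)
  calc (DhatO3f ν D).ncard ≤ (⋃ S ∈ F, A S).ncard := Set.ncard_le_ncard hsub hfin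
    _ ≤ ∑ S ∈ F, (A S).ncard := Finset.set_ncard_biUnion_le F A
    _ ≤ F.card • (2 * D + 1) ^ (4 * ν - 2) := Finset.sum_le_card_nsmul _ _ _ hA
    _ ≤ 2 ^ ν * (2 * D + 1) ^ (4 * ν - 2) := by
      rw [smul_eq_mul]
      refine Nat.mul_le_mul_right _ ((Finset.card_le_univ F).trans ?_)
      simp

/-! ### Lower bounds -/

/-- The value `-m t` for `t ≠ 0` in the lower-bound family: `t N + a t` for `t ≥ z`, and `0` for
`t < z`. -/
def blockValue {ν : ℕ} (z N : ℕ) (a : {t : Fin ν // ¬ t.val < z} → Fin N) (t : Fin ν) : ℤ :=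
  if h : t.val < z then 0 else (t.val : ℤ) * N + (a ⟨t, h⟩ : ℕ)

lemma blockValue_nonneg {ν z N : ℕ} (a : {t : Fin ν // ¬ t.val < z} → Fin N) (t : Fin ν) :
    0 ≤ blockValue z N a t := by
  unfold blockValue; split_ifs <;> positivity

lemma blockValue_le {ν z N : ℕ} (a : {t : Fin ν // ¬ t.val < z} → Fin N) (t : Fin ν) :
    blockValue z N a t ≤ ν * N := by
  unfold blockValue
  split_ifs with h
  · positivity
  · have h1 := (a ⟨t, h⟩).isLt
    have h2 : t.val + 1 ≤ ν := t.isLt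
    have h3 : (t.val + 1) * N ≤ ν * N := Nat.mul_le_mul_right N h2
    zify at h1 h3
    linarith

lemma blockValue_mono {ν z N : ℕ} (a : {t : Fin ν // ¬ t.val < z} → Fin N) {i j : Fin ν}
    (hij : i ≤ j) : blockValue z N a i ≤ blockValue z N a j := by
  rcases hij.eq_or_lt with rfl | hlt
  · exact le_rfl
  by_cases hi : i.val < z
  · have : blockValue z N a i = 0 := by simp [blockValue, hi]
    rw [this]; exact blockValue_nonneg a j
  have hlt' : i.val < j.val := hlt
  have hj : ¬ j.val < z := by omega
  simp only [blockValue, hi, hj, dif_neg, not_false_iff]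
  have h1 := (a ⟨i, hi⟩).isLt
  have h3 : (i.val + 1) * N ≤ j.val * N := Nat.mul_le_mul_right N hlt'
  have h4 : (0 : ℤ) ≤ (a ⟨j, hj⟩ : ℕ) := by positivity
  zify at h1 h3
  linarith

/-- The lower-bound family: a set containing all quadruples of `KhatO3f ν D` with `m t = 0` for
`1 ≤ t < z` and all `l t` even has at least `N^(4ν-z)` elements. -/
lemma pow_le_ncard {ν : ℕ} (hν : 0 < ν) {z N D : ℕ} (hz : 0 < z) (hzν : z ≤ ν)
    (hN : 6 * ν ^ 3 * N ≤ D) (B : Set (Quad ν)) (hBfin : B.Finite)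
    (hB : ∀ x ∈ KhatO3f ν D, (∀ t, 0 < t.val → t.val < z → x.1 t = 0) →
      (∀ t, Even (x.2.1 t)) → x ∈ B) :
    N ^ (4 * ν - z) ≤ B.ncard := by
  classical
  let t₀ : Fin ν := ⟨0, hν⟩
  let X := ({t : Fin ν // ¬ t.val < z} → Fin N) × (Fin ν → Fin N) × (Fin ν → Fin N) ×
    (Fin ν → Fin N)
  let m : ({t : Fin ν // ¬ t.val < z} → Fin N) → Fin ν → ℤ := fun a t =>
    (if t = t₀ then ∑ s, blockValue z N a s else 0) - blockValue z N a t
  let f : X → Quad ν := fun p =>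
    (m p.1, fun t => 2 * ((ν : ℤ) ^ 2 * N + (p.2.1 t : ℕ)), fun t => ((p.2.2.1 t : ℕ) : ℤ),
      fun t => ((p.2.2.2 t : ℕ) : ℤ))
  have hsum_nonneg : ∀ a : {t : Fin ν // ¬ t.val < z} → Fin N,
      0 ≤ ∑ s, blockValue z N a s := fun a =>
    Finset.sum_nonneg fun s _ => blockValue_nonneg a s
  have hsum_le : ∀ a : {t : Fin ν // ¬ t.val < z} → Fin N,
      ∑ s, blockValue z N a s ≤ (ν : ℤ) ^ 2 * N := fun a => by
    calc ∑ s, blockValue z N a s ≤ ∑ _s : Fin ν, (ν : ℤ) * N :=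
          Finset.sum_le_sum fun s _ => blockValue_le a s
      _ = (ν : ℤ) ^ 2 * N := by simp; ring
  have hν1 : (1 : ℤ) ≤ ν := by exact_mod_cast hν
  have hmem : ∀ p, f p ∈ B := by
    intro p
    obtain ⟨a, p, q, r⟩ := p
    refine hB _ ⟨?_, ?_, ?_, ?_, ?_, ?_, ?_, ?_⟩ ?_ ?_
    · intro i j hij
      have h1 := blockValue_mono a hij
      have h2 := hsum_nonneg a
      simp only [f, m]
      by_cases hj : j = t₀
      · have hi : i = t₀ := by
          apply Fin.ext
          have : i.val ≤ j.val := hij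
          rw [hj] at this
          simpa [t₀] using this
        rw [hi, hj]
      · rw [if_neg hj]
        split_ifs <;> linarith
    · simp [f, m, Finset.sum_sub_distrib]
    · intro t; simp only [f]; positivity
    · intro t
      have h1 := blockValue_nonneg a t
      have h2 : blockValue z N a t ≤ ∑ s, blockValue z N a s :=
        Finset.single_le_sum (f := blockValue z N a) (fun s _ => blockValue_nonneg a s)
          (Finset.mem_univ t)
      have h3 := hsum_le a
      have h4 : (0 : ℤ) ≤ (p t : ℕ) := by positivity
      have h5 : (0 : ℤ) ≤ (ν : ℤ) ^ 2 * N := by positivity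
      simp only [f, m]
      rw [abs_le]
      split_ifs <;> constructor <;> linarith
    · exact Finset.even_sum _ fun t _ => even_two_mul _
    · intro t; simp only [f]; positivity
    · intro t; simp only [f]; positivity
    · have hterm : ∀ t : Fin ν, ((q t : ℕ) : ℤ) + 2 * ((ν : ℤ) ^ 2 * N + (p t : ℕ)) + (r t : ℕ)
          ≤ 6 * (ν : ℤ) ^ 2 * N := by
        intro t
        have h1 := (p t).isLt
        have h2 := (q t).isLt
        have h3 := (r t).isLt
        zify at h1 h2 h3
        have h4 : (N : ℤ) ≤ (ν : ℤ) ^ 2 * N :=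
          le_mul_of_one_le_left (by positivity) (one_le_pow₀ hν1)
        linarith
      calc _ ≤ ∑ _t : Fin ν, 6 * (ν : ℤ) ^ 2 * N := Finset.sum_le_sum fun t _ => hterm t
        _ = ((6 * ν ^ 3 * N : ℕ) : ℤ) := by simp; ring
        _ ≤ D := by exact_mod_cast hN
    · intro t ht htz
      have hne : t ≠ t₀ := by rintro rfl; simp [t₀] at ht
      simp [f, m, hne, blockValue, htz]
    · intro t; exact even_two_mul _
  have hinj : Function.Injective f := by
    rintro ⟨a, p, q, r⟩ ⟨a', p', q', r'⟩ h
    simp only [f, Prod.mk.injEq] at h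
    obtain ⟨h1, h2, h3, h4⟩ := h
    have e1 : a = a' := by
      funext ⟨t, ht⟩
      have hne : t ≠ t₀ := by rintro rfl; simp [t₀, hz] at ht
      have := congrFun h1 t
      simp only [m, if_neg hne, blockValue, dif_neg ht] at this
      apply Fin.ext
      omega
    have e2 : p = p' := by
      funext t; have := congrFun h2 t; apply Fin.ext; omega
    have e3 : q = q' := by
      funext t; have := congrFun h3 t; apply Fin.ext; omega
    have e4 : r = r' := by
      funext t; have := congrFun h4 t; apply Fin.ext; omega
    rw [e1, e2, e3, e4]
  have hcardX : Fintype.card X = N ^ (4 * ν - z) := by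
    have hsub : Fintype.card {t : Fin ν // ¬ t.val < z} = ν - z := by
      rw [Fintype.card_subtype_compl, Fintype.card_fin, Fintype.card_subtype,
        Fin.card_filter_val_lt, min_eq_right hzν]
    simp only [X, Fintype.card_prod, Fintype.card_fun, Fintype.card_fin, hsub, ← pow_add]
    congr 1
    omega
  rw [← hcardX, ← Nat.card_eq_fintype_card, ← Set.ncard_univ]
  exact Set.ncard_le_ncard_of_injOn f (fun p _ => hmem p) hinj.injOn hBfin

lemma KhatO3f_lower {ν N D : ℕ} (hν : 0 < ν) (hN : 6 * ν ^ 3 * N ≤ D) :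
    N ^ (4 * ν - 1) ≤ (KhatO3f ν D).ncard :=
  pow_le_ncard hν one_pos hν hN _ (KhatO3f_upper hν D).1 fun _ hx _ _ => hx

lemma DhatO3f_lower {ν N D : ℕ} (hν : 2 ≤ ν) (hN : 6 * ν ^ 3 * N ≤ D) :
    N ^ (4 * ν - 2) ≤ (DhatO3f ν D).ncard := by
  have hν0 : 0 < ν := by omega
  refine pow_le_ncard hν0 two_pos hν hN _
    ((KhatO3f_upper hν0 D).1.subset fun x hx => hx.1) fun x hx hm hl => ?_
  -- The witness for dependence is `S = {1}`.
  refine ⟨hx, {⟨1, hν⟩}, Finset.singleton_nonempty _, ?_, ?_, ?_⟩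
  · intro h
    have := congrArg Finset.card h
    simp at this
    omega
  · rw [Finset.sum_singleton]
    exact hm _ one_pos one_lt_two
  · rw [Finset.sum_singleton]
    exact hl _

/-! ### Asymptotics -/

/-- For large `D`, the integer `N = ⌊D / (6ν³)⌋` is at least `D / (12ν³)`. -/
lemma exists_scale {ν D : ℕ} (hν : 0 < ν) (hD : 6 * ν ^ 3 ≤ D) :
    ∃ N : ℕ, 6 * ν ^ 3 * N ≤ D ∧ (1 / (12 * (ν : ℝ) ^ 3)) * D ≤ N := by
  have hpos : 0 < 6 * ν ^ 3 := by positivity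
  refine ⟨D / (6 * ν ^ 3), Nat.mul_div_le D _, ?_⟩
  have h1 : 1 ≤ D / (6 * ν ^ 3) := (Nat.one_le_div_iff hpos).2 hD
  have h2 : D < 6 * ν ^ 3 * (D / (6 * ν ^ 3) + 1) := Nat.lt_mul_div_succ D hpos
  generalize D / (6 * ν ^ 3) = N at h1 h2
  have h3 : D ≤ 12 * ν ^ 3 * N := by nlinarith
  have h4 : (D : ℝ) ≤ 12 * (ν : ℝ) ^ 3 * N := by exact_mod_cast h3
  have hν' : (0 : ℝ) < ν := by exact_mod_cast hν
  rw [div_mul_eq_mul_div, one_mul, div_le_iff₀ (by positivity)]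
  linarith

/-- For fixed `ν ≥ 3`, `#K̂^f_{O(3)}(ν, D) = Θ(D^(4ν−1))` and
`#D̂^f_{O(3)}(ν, D) = Θ(D^(4ν−2))`; consequently their ratio is `Θ(1/D)`. -/
theorem KhatO3f_theta (ν : ℕ) (hν : 3 ≤ ν) :
    (∃ c C : ℝ, 0 < c ∧ c ≤ C ∧ ∃ D₀ : ℕ, ∀ D : ℕ, D₀ ≤ D →
      c * (D : ℝ) ^ (4 * ν - 1) ≤ ((KhatO3f ν D).ncard : ℝ) ∧
      ((KhatO3f ν D).ncard : ℝ) ≤ C * (D : ℝ) ^ (4 * ν - 1)) ∧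
    (∃ c C : ℝ, 0 < c ∧ c ≤ C ∧ ∃ D₀ : ℕ, ∀ D : ℕ, D₀ ≤ D →
      c * (D : ℝ) ^ (4 * ν - 2) ≤ ((DhatO3f ν D).ncard : ℝ) ∧
      ((DhatO3f ν D).ncard : ℝ) ≤ C * (D : ℝ) ^ (4 * ν - 2)) ∧
    (∃ c C : ℝ, 0 < c ∧ c ≤ C ∧ ∃ D₀ : ℕ, ∀ D : ℕ, D₀ ≤ D →
      c / (D : ℝ) ≤ ((DhatO3f ν D).ncard : ℝ) / ((KhatO3f ν D).ncard : ℝ) ∧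
      ((DhatO3f ν D).ncard : ℝ) / ((KhatO3f ν D).ncard : ℝ) ≤ C / (D : ℝ)) := by
  have hν0 : 0 < ν := by omega
  have hνR : (1 : ℝ) ≤ ν := by exact_mod_cast hν0
  set ε : ℝ := 1 / (12 * (ν : ℝ) ^ 3) with hε
  have hε0 : 0 < ε := by positivity
  have hε1 : ε ≤ 3 := by
    have h1 : (1 : ℝ) ≤ (ν : ℝ) ^ 3 := one_le_pow₀ hνR
    rw [hε, div_le_iff₀ (by positivity)]
    linarith
  have h2ν : (1 : ℝ) ≤ 2 ^ ν := one_le_pow₀ one_le_two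
  have hK : ∀ D : ℕ, 6 * ν ^ 3 ≤ D →
      ε ^ (4 * ν - 1) * (D : ℝ) ^ (4 * ν - 1) ≤ ((KhatO3f ν D).ncard : ℝ) ∧
      ((KhatO3f ν D).ncard : ℝ) ≤ 3 ^ (4 * ν - 1) * (D : ℝ) ^ (4 * ν - 1) := by
    intro D hD
    have hD1 : 1 ≤ D := le_trans (Nat.succ_le_of_lt (by positivity)) hD
    obtain ⟨N, hN, hNε⟩ := exists_scale hν0 hD
    constructor
    · rw [← mul_pow]
      calc (ε * (D : ℝ)) ^ (4 * ν - 1) ≤ (N : ℝ) ^ (4 * ν - 1) := by gcongr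
        _ ≤ _ := by exact_mod_cast KhatO3f_lower hν0 hN
    · rw [← mul_pow]
      have h : (2 * D + 1) ^ (4 * ν - 1) ≤ (3 * D) ^ (4 * ν - 1) :=
        Nat.pow_le_pow_left (by omega) _
      exact_mod_cast (KhatO3f_upper hν0 D).2.trans h
  have hDh : ∀ D : ℕ, 6 * ν ^ 3 ≤ D →
      ε ^ (4 * ν - 2) * (D : ℝ) ^ (4 * ν - 2) ≤ ((DhatO3f ν D).ncard : ℝ) ∧
      ((DhatO3f ν D).ncard : ℝ) ≤ (2 ^ ν * 3 ^ (4 * ν - 2)) * (D : ℝ) ^ (4 * ν - 2) := by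
    intro D hD
    have hD1 : 1 ≤ D := le_trans (Nat.succ_le_of_lt (by positivity)) hD
    obtain ⟨N, hN, hNε⟩ := exists_scale hν0 hD
    constructor
    · rw [← mul_pow]
      calc (ε * (D : ℝ)) ^ (4 * ν - 2) ≤ (N : ℝ) ^ (4 * ν - 2) := by gcongr
        _ ≤ _ := by exact_mod_cast DhatO3f_lower (by omega) hN
    · rw [mul_assoc, ← mul_pow]
      have h : (2 * D + 1) ^ (4 * ν - 2) ≤ (3 * D) ^ (4 * ν - 2) :=
        Nat.pow_le_pow_left (by omega) _
      exact_mod_cast (DhatO3f_upper hν0 D).trans (Nat.mul_le_mul_left _ h)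
  have hcC1 : ε ^ (4 * ν - 1) ≤ (3 : ℝ) ^ (4 * ν - 1) := by gcongr
  have hcC2 : ε ^ (4 * ν - 2) ≤ (2 : ℝ) ^ ν * 3 ^ (4 * ν - 2) := by
    calc ε ^ (4 * ν - 2) ≤ (3 : ℝ) ^ (4 * ν - 2) := by gcongr
      _ ≤ _ := le_mul_of_one_le_left (by positivity) h2ν
  refine ⟨⟨_, _, by positivity, hcC1, _, hK⟩, ⟨_, _, by positivity, hcC2, _, hDh⟩,
    ε ^ (4 * ν - 2) / 3 ^ (4 * ν - 1), 2 ^ ν * 3 ^ (4 * ν - 2) / ε ^ (4 * ν - 1),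
    by positivity, by gcongr, 6 * ν ^ 3, fun D hD => ?_⟩
  obtain ⟨k1, k2⟩ := hK D hD
  obtain ⟨d1, d2⟩ := hDh D hD
  have hD0 : (0 : ℝ) < D := by
    have : 0 < D := lt_of_lt_of_le (by positivity) hD
    exact_mod_cast this
  have hKpos : (0 : ℝ) < ((KhatO3f ν D).ncard : ℝ) := lt_of_lt_of_le (by positivity) k1
  have hpow : (D : ℝ) ^ (4 * ν - 1) = (D : ℝ) ^ (4 * ν - 2) * D := by
    rw [← pow_succ]; congr 1; omega
  rw [hpow] at k1 k2
  constructor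
  · calc ε ^ (4 * ν - 2) / 3 ^ (4 * ν - 1) / (D : ℝ)
        = ε ^ (4 * ν - 2) * (D : ℝ) ^ (4 * ν - 2) /
          (3 ^ (4 * ν - 1) * ((D : ℝ) ^ (4 * ν - 2) * D)) := by field_simp
      _ ≤ _ := by gcongr
  · calc ((DhatO3f ν D).ncard : ℝ) / ((KhatO3f ν D).ncard : ℝ)
        ≤ (2 ^ ν * 3 ^ (4 * ν - 2)) * (D : ℝ) ^ (4 * ν - 2) /
          (ε ^ (4 * ν - 1) * ((D : ℝ) ^ (4 * ν - 2) * D)) := by gcongr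
      _ = _ := by field_simp
end
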